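/- arXiv:1203.1955 — 2 statements merged into one kernel-verified Lean document; each statement's English description precedes it below -/
import Mathlib

section
/- Let R be a Cohen-Macaulay commutative noetherian local ring of Krull dimension d, and let a be an element of R such that a·Ext_R^i(K,L) = 0 for all integers i > 0 and all modules K, L in CM_0(R). Then a^{2^{2d}(d+1)}·Ext_R^i(M,N) = 0 for all integers i > d and all finitely generated R-modules M and N. -/
open CategoryTheory IsLocalRing

noncomputable section

/-- The `i`-th Tor module of two `R`-modules, as an object of `ModuleCat R`. -/
def TorMod (R : Type) [CommRing R] (i : ℕ) (M N : ModuleCat.{0} R) : ModuleCat.{0} R :=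
  ((Tor (ModuleCat.{0} R) i).obj M).obj N

/-- The `i`-th Ext module of two `R`-modules, as an object of `ModuleCat R`. -/
def ExtMod (R : Type) [CommRing R] (i : ℕ) (M N : ModuleCat.{0} R) : ModuleCat.{0} R :=
  ((Ext R (ModuleCat.{0} R) i).obj (Opposite.op M)).obj N

/-- Integer-indexed Tor: `Tor_n = 0` for `n < 0`. -/
def TorZ (R : Type) [CommRing R] (n : ℤ) (M N : ModuleCat.{0} R) : ModuleCat.{0} R :=
  if 0 ≤ n then TorMod R n.toNat M N else ModuleCat.of R PUnit

/-- Integer-indexed Ext: `Ext^n = 0` for `n < 0`. -/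
def ExtZ (R : Type) [CommRing R] (n : ℤ) (M N : ModuleCat.{0} R) : ModuleCat.{0} R :=
  if 0 ≤ n then ExtMod R n.toNat M N else ModuleCat.of R PUnit

/-- The depth of a module `N` over a local ring `S`, defined as the infimum of the set of
integers `i` such that `Ext^i(k, N) ≠ 0`, where `k` is the residue field of `S`
(`⊤` if no such `i` exists). -/
def moduleDepth (S : Type) [CommRing S] [IsLocalRing S] (N : Type) [AddCommGroup N]
    [Module S N] : ℕ∞ :=
  sInf {i : ℕ∞ | ∃ j : ℕ, i = (j : ℕ∞) ∧
    Nontrivial (ExtMod S j (ModuleCat.of S (ResidueField S)) (ModuleCat.of S N))}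

/-- A local ring is regular if it is noetherian and its maximal ideal can be generated by
(Krull dimension of `S`)-many elements. -/
def IsRegularLocal (S : Type) [CommRing S] [IsLocalRing S] : Prop :=
  IsNoetherianRing S ∧ ∃ s : Finset S, Ideal.span (s : Set S) = maximalIdeal S ∧
    (s.card : WithBot ℕ∞) = ringKrullDim S

/-- A local ring is Cohen-Macaulay if its depth (as a module over itself) equals its
Krull dimension. -/
def IsCMLocalRing (R : Type) [CommRing R] [IsLocalRing R] : Prop :=
  (moduleDepth R R : WithBot ℕ∞) = ringKrullDim R

/-- A module `M` over a local ring `R` is maximal Cohen-Macaulay if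
`depth M_p ≥ dim R_p` for every prime ideal `p` of `R`. -/
def IsMCMModule (R : Type) [CommRing R] [IsLocalRing R] (M : Type) [AddCommGroup M]
    [Module R M] : Prop :=
  ∀ (p : Ideal R) [p.IsPrime],
    ringKrullDim (Localization.AtPrime p) ≤
      (moduleDepth (Localization.AtPrime p) (LocalizedModule p.primeCompl M) : WithBot ℕ∞)

/-- Membership in `CM(R)`: finitely generated maximal Cohen-Macaulay modules. -/
def MemCM (R : Type) [CommRing R] [IsLocalRing R] (M : ModuleCat.{0} R) : Prop :=
  Module.Finite R M ∧ IsMCMModule R M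

/-- Membership in `CM₀(R)`: finitely generated maximal Cohen-Macaulay modules that are
locally free on the punctured spectrum. -/
def MemCM0 (R : Type) [CommRing R] [IsLocalRing R] (M : ModuleCat.{0} R) : Prop :=
  Module.Finite R M ∧ IsMCMModule R M ∧
    ∀ (p : Ideal R) [p.IsPrime], p ≠ maximalIdeal R →
      Module.Free (Localization.AtPrime p) (LocalizedModule p.primeCompl M)

/-- The singular locus of `R`: primes `p` such that `R_p` is not regular. -/
def singularLocus (R : Type) [CommRing R] : Set (PrimeSpectrum R) :=
  {p | ¬ IsRegularLocal (Localization.AtPrime p.asIdeal)}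

/-- The nonfree locus of a module `M`: primes `p` such that `M_p` is not a free
`R_p`-module. -/
def nonfreeLocus (R : Type) [CommRing R] (M : Type) [AddCommGroup M] [Module R M] :
    Set (PrimeSpectrum R) :=
  {p | ¬ Module.Free (Localization.AtPrime p.asIdeal)
        (LocalizedModule p.asIdeal.primeCompl M)}

/-- `K` is a first syzygy of `N` in a minimal free resolution: there is a surjection
`f : R^n → N` with `ker f ⊆ m·R^n` and `K ≅ ker f`. -/
def IsMinimalSyzygy1 (R : Type) [CommRing R] [IsLocalRing R] (N K : ModuleCat.{0} R) : Prop :=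
  ∃ (n : ℕ) (f : (Fin n → R) →ₗ[R] N), Function.Surjective f ∧
    LinearMap.ker f ≤ (maximalIdeal R) • (⊤ : Submodule R (Fin n → R)) ∧
    Nonempty (K ≃ₗ[R] LinearMap.ker f)

/-- `K` is a `d`-th syzygy of `N` in a minimal free resolution. -/
def IsMinimalSyzygy (R : Type) [CommRing R] [IsLocalRing R] :
    ℕ → ModuleCat.{0} R → ModuleCat.{0} R → Prop
  | 0, N, K => Nonempty ((K : Type) ≃ₗ[R] N)
  | d + 1, N, K => ∃ L : ModuleCat.{0} R, IsMinimalSyzygy1 R N L ∧ IsMinimalSyzygy R d L K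

/-- A module is indecomposable if it is nonzero and is not isomorphic to the direct sum of
two nonzero modules. -/
def IndecomposableModule (R : Type) [CommRing R] (M : Type) [AddCommGroup M] [Module R M] :
    Prop :=
  Nontrivial M ∧ ∀ (A B : Type) [AddCommGroup A] [Module R A] [AddCommGroup B] [Module R B],
    Nonempty (M ≃ₗ[R] A × B) → (Subsingleton A ∨ Subsingleton B)

namespace Stmt6

/-- `c` kills `Ext^i(M,N)` (derived category version). -/
def Kills {R : Type} [CommRing R] (c : R) (i : ℕ) (M N : ModuleCat.{0} R) : Prop :=
  ∀ x : Abelian.Ext M N i, c • x = 0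

lemma kills_equiv {R : Type} [CommRing R] {A B : Type} [AddCommGroup A] [AddCommGroup B]
    [Module R A] [Module R B] (e : A ≃ₗ[R] B) (c : R) :
    (∀ y : A, c • y = 0) ↔ ∀ y : B, c • y = 0 := by
  constructor
  · intro h y
    have := h (e.symm y)
    rw [← map_smul] at this
    exact e.symm.injective (this.trans (map_zero _).symm)
  · intro h y
    have := h (e y)
    rw [← map_smul] at this
    exact e.injective (this.trans (map_zero _).symm)

lemma kills_iso {R : Type} [CommRing R] {A B : ModuleCat.{0} R} (e : A ≅ B) (c : R) :
    (∀ y : A, c • y = 0) ↔ ∀ y : B, c • y = 0 := kills_equiv e.toLinearEquiv c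

lemma kills_homology {R : Type} [CommRing R] (S : ShortComplex (ModuleCat.{0} R)) (c : R) :
    (∀ y : S.homology, c • y = 0) ↔
      ∀ z : S.X₂, S.g z = 0 → ∃ w : S.X₁, S.f w = c • z := by
  let e : S.homology ≃ₗ[R] (LinearMap.ker S.g.hom ⧸ LinearMap.range S.moduleCatToCycles) :=
    S.moduleCatHomologyIso.toLinearEquiv
  rw [kills_equiv e c]
  constructor
  · intro h z hz
    have := h (Submodule.Quotient.mk ⟨z, hz⟩)
    rw [← Submodule.Quotient.mk_smul, Submodule.Quotient.mk_eq_zero] at this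
    obtain ⟨w, hw⟩ := this
    exact ⟨w, congrArg Subtype.val hw⟩
  · intro h y
    obtain ⟨⟨z, hz⟩, rfl⟩ := Submodule.Quotient.mk_surjective _ y
    obtain ⟨w, hw⟩ := h z hz
    rw [← Submodule.Quotient.mk_smul, Submodule.Quotient.mk_eq_zero]
    exact ⟨w, Subtype.ext hw⟩

lemma extMod_iff_sc {R : Type} [CommRing R] (c : R) (n : ℕ) (M N : ModuleCat.{0} R)
    (P : ProjectiveResolution M) (i : ℕ) (hi : (ComplexShape.up ℕ).prev n = i) :
    (∀ x : ExtMod R n M N, c • x = 0) ↔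
      ∀ f : P.complex.X n ⟶ N, P.complex.d (n+1) n ≫ f = 0 →
        ∃ g : P.complex.X i ⟶ N, P.complex.d n i ≫ g = c • f := by
  have e := P.isoExt (R := R) n N
  have e' := e ≪≫ (P.complex.linearYonedaObj R N).homologyIsoSc' i n (n+1) hi (by simp)
  refine (kills_iso e' c).trans (kills_homology _ c)

lemma smul_extMk {R : Type} [CommRing R] (c : R) (n : ℕ) (M N : ModuleCat.{0} R)
    (P : ProjectiveResolution M) (f : P.complex.X n ⟶ N) (hf : P.complex.d (n+1) n ≫ f = 0) :
    c • P.extMk f (n+1) rfl hf = P.extMk (c • f) (n+1) rfl (by simp [hf]) := by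
  rw [Abelian.Ext.smul_eq_comp_mk₀, ProjectiveResolution.extMk_comp_mk₀]
  congr 1

lemma bridge {R : Type} [CommRing R] (c : R) (n : ℕ) (M N : ModuleCat.{0} R) :
    (∀ x : ExtMod R n M N, c • x = 0) ↔ Kills c n M N := by
  let P := projectiveResolution M
  cases n with
  | succ n =>
    rw [extMod_iff_sc c (n+1) M N P n (by simp)]
    constructor
    · intro h x
      obtain ⟨f, hf, rfl⟩ := P.extMk_surjective x (n+1+1) rfl
      rw [smul_extMk, P.extMk_eq_zero_iff _ _ _ _ n rfl]
      exact h f hf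
    · intro h f hf
      have := h (P.extMk f _ rfl hf)
      rw [smul_extMk, P.extMk_eq_zero_iff _ _ _ _ n rfl] at this
      exact this
  | zero =>
    rw [extMod_iff_sc c 0 M N P 0 (by simp)]
    have key : ∀ (f : P.complex.X 0 ⟶ N) (hf : P.complex.d (0+1) 0 ≫ f = 0),
        P.extMk f (0+1) rfl hf = 0 ↔ f = 0 := by
      intro f hf
      constructor
      · intro h
        have h2 := congrArg P.extEquivCohomologyClass h
        rw [ProjectiveResolution.extEquivCohomologyClass_extMk,
          ProjectiveResolution.extEquivCohomologyClass_zero,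
          CochainComplex.HomComplex.CohomologyClass.mk_eq_zero_iff,
          CochainComplex.HomComplex.Cocycle.toSingleMk_mem_coboundaries_iff _ _ _ _ _ 1 (by simp)] at h2
        obtain ⟨g, hg⟩ := h2
        have hz : Limits.IsZero (P.cochainComplex.X 1) := P.cochainComplex.isZero_of_isStrictlyLE 0 1
        have : g = 0 := hz.eq_of_src _ _
        rw [this, Limits.comp_zero] at hg
        rw [← cancel_epi (P.cochainComplexXIso (-(0:ℕ)) 0 rfl).hom, Limits.comp_zero]
        exact hg.symm
      · rintro rfl
        simp
    constructor
    · intro h x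
      obtain ⟨f, hf, rfl⟩ := P.extMk_surjective x (0+1) rfl
      rw [smul_extMk, key]
      obtain ⟨g, hg⟩ := h f hf
      rw [← hg, P.complex.shape _ _ (by simp), Limits.zero_comp]
    · intro h f hf
      have := h (P.extMk f _ rfl hf)
      rw [smul_extMk, key] at this
      exact ⟨0, by rw [this, Limits.comp_zero]⟩

lemma not_nontrivial_extMod_iff {R : Type} [CommRing R] (n : ℕ) (M N : ModuleCat.{0} R) :
    ¬ Nontrivial (ExtMod R n M N) ↔ Subsingleton (Abelian.Ext M N n) := by
  have := bridge (1 : R) n M N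
  simp only [Kills, one_smul] at this
  rw [not_nontrivial_iff_subsingleton, subsingleton_iff_forall_eq 0, this,
    subsingleton_iff_forall_eq 0]

lemma le_moduleDepth_iff (S : Type) [CommRing S] [IsLocalRing S] (N : Type) [AddCommGroup N]
    [Module S N] (n : ℕ) : (n : ℕ∞) ≤ moduleDepth S N ↔
      ∀ j < n, Subsingleton (Abelian.Ext (ModuleCat.of S (ResidueField S)) (ModuleCat.of S N) j) := by
  unfold moduleDepth
  rw [le_sInf_iff]
  constructor
  · intro h j hj
    rw [← not_nontrivial_extMod_iff]
    intro hn
    have := h j ⟨j, rfl, hn⟩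
    have : n ≤ j := by exact_mod_cast this
    omega
  · rintro h _ ⟨j, rfl, hn⟩
    by_contra hlt
    have : j < n := by
      have := not_le.mp hlt
      exact_mod_cast this
    exact (not_nontrivial_extMod_iff j _ _).mpr (h j this) hn

end Stmt6

namespace Stmt6
open Abelian Pointwise

variable {R : Type} [CommRing R]

lemma kills_mono {c c' : R} (h : c ∣ c') {i : ℕ} {M N : ModuleCat.{0} R} (hk : Kills c i M N) :
    Kills c' i M N := by
  obtain ⟨e, rfl⟩ := h
  intro x
  rw [mul_comm, mul_smul, hk x, smul_zero]

/-- covariant, middle -/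
lemma kills_cov_mid {S : ShortComplex (ModuleCat.{0} R)} (hS : S.ShortExact) {K : ModuleCat.{0} R}
    {c c' : R} {i : ℕ} (h1 : Kills c i K S.X₁) (h3 : Kills c' i K S.X₃) :
    Kills (c * c') i K S.X₂ := by
  intro x
  obtain ⟨y, hy⟩ := Ext.covariant_sequence_exact₂ K hS (c' • x) (by
    rw [Ext.smul_comp, h3])
  rw [mul_smul, ← hy, ← Ext.smul_comp, h1, Ext.zero_comp]

/-- covariant, right term -/
lemma kills_cov_right {S : ShortComplex (ModuleCat.{0} R)} (hS : S.ShortExact)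
    {K : ModuleCat.{0} R}
    {c c' : R} {i : ℕ} (h2 : Kills c i K S.X₂) (h1 : Kills c' (i+1) K S.X₁) :
    Kills (c * c') i K S.X₃ := by
  intro x
  obtain ⟨y, hy⟩ := Ext.covariant_sequence_exact₃ K hS (c' • x) rfl (by
    rw [Ext.smul_comp, h1])
  rw [mul_smul, ← hy, ← Ext.smul_comp, h2, Ext.zero_comp]

/-- covariant, left term -/
lemma kills_cov_left {S : ShortComplex (ModuleCat.{0} R)} (hS : S.ShortExact)
    {K : ModuleCat.{0} R}
    {c c' : R} {i : ℕ} (h3 : Kills c i K S.X₃) (h2 : Kills c' (i+1) K S.X₂) :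
    Kills (c * c') (i+1) K S.X₁ := by
  intro x
  obtain ⟨y, hy⟩ := Ext.covariant_sequence_exact₁ K hS (c' • x) (by
    rw [Ext.smul_comp, h2]) rfl
  rw [mul_smul, ← hy, ← Ext.smul_comp, h3, Ext.zero_comp]

/-- contravariant, middle -/
lemma kills_contra_mid {S : ShortComplex (ModuleCat.{0} R)} (hS : S.ShortExact)
    {N : ModuleCat.{0} R}
    {c c' : R} {i : ℕ} (h1 : Kills c i S.X₁ N) (h3 : Kills c' i S.X₃ N) :
    Kills (c' * c) i S.X₂ N := by
  intro x
  obtain ⟨y, hy⟩ := Ext.contravariant_sequence_exact₂ hS N (c • x) (by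
    rw [Ext.comp_smul, h1])
  rw [mul_smul, ← hy, ← Ext.comp_smul, h3, Ext.comp_zero]

/-- dimension shift in the first variable -/
lemma kills_shift {S : ShortComplex (ModuleCat.{0} R)} (hS : S.ShortExact) [Projective S.X₂]
    {N : ModuleCat.{0} R} {c : R} {i : ℕ} (h1 : Kills c i S.X₁ N) :
    Kills c (i+1) S.X₃ N := by
  intro x
  obtain ⟨y, rfl⟩ := precomp_extClass_surjective_of_projective_X₂ N hS i x
  have : c • (hS.extClass.comp y (add_comm 1 i)) = 0 := by
    rw [← Ext.comp_smul, h1, Ext.comp_zero]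
  exact this

lemma eq_zero_of_forall_pow [IsNoetherianRing R] [IsLocalRing R] {E : Type} [AddCommGroup E]
    [Module R E] [Module.Finite R E] {x : R} (hx : x ∈ maximalIdeal R) {y : E}
    (h : ∀ n : ℕ, ∃ z : E, x ^ n • z = y) : y = 0 := by
  have := Ideal.iInf_pow_smul_eq_bot_of_isLocalRing (R := R) (M := E) (maximalIdeal R)
    (Ideal.IsPrime.ne_top inferInstance)
  rw [← Submodule.mem_bot R, ← this, Submodule.mem_iInf]
  intro n
  obtain ⟨z, rfl⟩ := h n
  exact Submodule.smul_mem_smul (Ideal.pow_mem_pow hx n) trivial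

lemma kills_cov_aux {S : ShortComplex (ModuleCat.{0} R)} (hS : S.ShortExact)
    {K : ModuleCat.{0} R} {c : R} {i : ℕ} (h3 : Kills c i K S.X₃) (x : Abelian.Ext K S.X₂ i) :
    ∃ y : Abelian.Ext K S.X₁ i, y.comp (Ext.mk₀ S.f) (add_zero i) = c • x :=
  Ext.covariant_sequence_exact₂ K hS (c • x) (by rw [Ext.smul_comp, h3])

lemma kills_contra_aux {S : ShortComplex (ModuleCat.{0} R)} (hS : S.ShortExact)
    {N : ModuleCat.{0} R} {c : R} {i : ℕ} (h3 : Kills c (i+1) S.X₃ N) (x : Abelian.Ext S.X₁ N i) :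
    ∃ y : Abelian.Ext S.X₂ N i, (Ext.mk₀ S.f).comp y (zero_add i) = c • x :=
  Ext.contravariant_sequence_exact₁ hS N (c • x) (add_comm 1 i) (by rw [Ext.comp_smul, h3])

lemma kills_cov_regular [IsNoetherianRing R] [IsLocalRing R] {K N : ModuleCat.{0} R}
    [Module.Finite R K] [Module.Finite R N] {x : R} (hx : x ∈ maximalIdeal R)
    (reg : IsSMulRegular N x) {c : R} {i : ℕ}
    (h : ∀ n : ℕ, Kills c i K (ModuleCat.of R (QuotSMulTop (x ^ n) N))) : Kills c i K N := by
  intro y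
  refine eq_zero_of_forall_pow (R := R) hx fun n => ?_
  have : ∃ z : Abelian.Ext K N i, z.comp (Ext.mk₀ (x ^ n • 𝟙 N)) (add_zero i) = c • y :=
    kills_cov_aux (reg.pow n).smulShortComplex_shortExact (h n) y
  obtain ⟨z, hz⟩ := this
  exact ⟨z, by rw [← hz, Ext.smul_eq_comp_mk₀]⟩

lemma kills_contra_regular [IsNoetherianRing R] [IsLocalRing R] {M N : ModuleCat.{0} R}
    [Module.Finite R M] [Module.Finite R N] {x : R} (hx : x ∈ maximalIdeal R)
    (reg : IsSMulRegular M x) {c : R} {i : ℕ}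
    (h : ∀ n : ℕ, Kills c (i+1) (ModuleCat.of R (QuotSMulTop (x ^ n) M)) N) : Kills c i M N := by
  intro y
  refine eq_zero_of_forall_pow (R := R) hx fun n => ?_
  have : ∃ z : Abelian.Ext M N i, (Ext.mk₀ (x ^ n • 𝟙 M)).comp z (zero_add i) = c • y :=
    kills_contra_aux (reg.pow n).smulShortComplex_shortExact (h n) y
  obtain ⟨z, hz⟩ := this
  refine ⟨z, ?_⟩
  rw [← hz, Ext.mk₀_smul, Ext.smul_comp, Ext.mk₀_id_comp]

/-- modules killed by a power of each member of a list -/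
def TorL (l : List R) (N : Type) [AddCommGroup N] [Module R N] : Prop :=
  ∀ x ∈ l, ∃ n : ℕ, ∀ y : N, x ^ n • y = 0

lemma exists_torsion [IsNoetherianRing R] (N : Type) [AddCommGroup N] [Module R N]
    [Module.Finite R N] (x : R) : ∃ (G : Submodule R N) (n : ℕ), (∀ y ∈ G, x ^ n • y = 0) ∧
      IsSMulRegular (N ⧸ G) x := by
  let f : ℕ →o Submodule R N :=
    ⟨fun n => LinearMap.ker (LinearMap.lsmul R N (x ^ n)), by
      refine monotone_nat_of_le_succ fun n y hy => ?_
      simp only [LinearMap.mem_ker, LinearMap.lsmul_apply] at hy ⊢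
      rw [pow_succ', mul_smul, hy, smul_zero]⟩
  obtain ⟨n, hn⟩ := monotone_stabilizes_iff_noetherian.mpr (inferInstanceAs (IsNoetherian R N)) f
  refine ⟨f n, n, fun y hy => hy, ?_⟩
  rw [isSMulRegular_quotient_iff_mem_of_smul_mem]
  intro y hy
  have h1 : y ∈ f (n+1) := by
    have : x ^ n • x • y = 0 := hy
    change x ^ (n+1) • y = 0
    rwa [pow_succ, mul_smul]
  rwa [hn (n+1) (by omega)]

lemma devissage [IsNoetherianRing R] [IsLocalRing R] (Q : R → ModuleCat.{0} R → Prop)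
    (hex : ∀ (S : ShortComplex (ModuleCat.{0} R)) (c : R), S.ShortExact →
      Module.Finite R S.X₁ → Module.Finite R S.X₂ → Module.Finite R S.X₃ →
      Q c S.X₁ → Q c S.X₃ → Q (c * c) S.X₂)
    (hreg : ∀ (N : ModuleCat.{0} R) (c x : R), Module.Finite R N → x ∈ maximalIdeal R →
      IsSMulRegular N x → (∀ n : ℕ, Q c (ModuleCat.of R (QuotSMulTop (x ^ n) N))) → Q c N)
    (l : List R) (hl : ∀ x ∈ l, x ∈ maximalIdeal R) (c : R)
    (h : ∀ N : ModuleCat.{0} R, Module.Finite R N → TorL l N → Q c N) :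
    ∀ N : ModuleCat.{0} R, Module.Finite R N → Q (c ^ 2 ^ l.length) N := by
  induction l generalizing c with
  | nil =>
    intro N hN
    have := h N hN (fun x hx => absurd hx List.not_mem_nil)
    rwa [List.length_nil, pow_zero, pow_one]
  | cons x l ih =>
    have := ih (fun y hy => hl y (List.mem_cons_of_mem _ hy)) (c * c) (by
      intro N hN hT
      obtain ⟨G, n, hG, hr⟩ := exists_torsion N x
      refine hex (G.mkQ.shortComplexKer) c
        (LinearMap.shortExact_shortComplexKer G.mkQ_surjective) ?_ hN ?_ ?_ ?_
      · exact (inferInstance : Module.Finite R (LinearMap.ker G.mkQ))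
      · exact (inferInstance : Module.Finite R (N ⧸ G))
      · refine h _ (inferInstance : Module.Finite R (LinearMap.ker G.mkQ)) ?_
        intro z hz
        rcases List.mem_cons.mp hz with rfl | hz
        · refine ⟨n, fun y => Subtype.ext (hG y.1 ?_)⟩
          exact (Submodule.ker_mkQ G).le y.2
        · obtain ⟨k, hk⟩ := hT z hz
          exact ⟨k, fun y => Subtype.ext (hk y.1)⟩
      · refine hreg _ c x (inferInstance : Module.Finite R (N ⧸ G))
          (hl x List.mem_cons_self) hr fun k => ?_
        refine h _ (inferInstance : Module.Finite R (QuotSMulTop (x ^ k) (N ⧸ G))) ?_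
        intro z hz
        rcases List.mem_cons.mp hz with rfl | hz
        · refine ⟨k, fun y => ?_⟩
          obtain ⟨y, rfl⟩ := Submodule.Quotient.mk_surjective _ y
          rw [← Submodule.Quotient.mk_smul, Submodule.Quotient.mk_eq_zero]
          exact Submodule.smul_mem_pointwise_smul _ _ _ trivial
        · obtain ⟨k', hk⟩ := hT z hz
          refine ⟨k', fun y => ?_⟩
          obtain ⟨y, rfl⟩ := Submodule.Quotient.mk_surjective _ y
          obtain ⟨y, rfl⟩ := Submodule.Quotient.mk_surjective _ y
          rw [← Submodule.Quotient.mk_smul, ← Submodule.Quotient.mk_smul, hk]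
          rfl)
    have e : c ^ 2 ^ (x :: l).length = (c * c) ^ 2 ^ l.length := by
      rw [List.length_cons, pow_succ', pow_mul, sq]
    rwa [e]

end Stmt6

namespace Stmt6
open Abelian Pointwise

variable {R : Type} [CommRing R]

lemma kills_one_iff {i : ℕ} {M N : ModuleCat.{0} R} :
    Kills (1 : R) i M N ↔ Subsingleton (Abelian.Ext M N i) := by
  unfold Kills
  rw [subsingleton_iff_forall_eq 0]
  exact forall_congr' fun x => by rw [one_smul]

lemma kills_congr_left {c : R} {i : ℕ} {M M' N : ModuleCat.{0} R} (e : M ≅ M')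
    (h : Kills c i M N) : Kills c i M' N := by
  intro x
  have h1 : c • ((Ext.mk₀ e.hom).comp x (zero_add i)) = 0 := h _
  have h2 : x = (Ext.mk₀ e.inv).comp ((Ext.mk₀ e.hom).comp x (zero_add i)) (zero_add i) := by
    rw [Ext.mk₀_comp_mk₀_assoc, e.inv_hom_id, Ext.mk₀_id_comp]
  rw [h2, ← Ext.comp_smul, h1, Ext.comp_zero]

lemma kills_of_subsingleton_left {c : R} {i : ℕ} {M N : ModuleCat.{0} R} [Subsingleton M] :
    Kills c i M N := by
  intro x
  have h2 : x = (Ext.mk₀ (𝟙 M)).comp x (zero_add i) := by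
    rw [Ext.mk₀_id_comp]
  have : 𝟙 M = 0 := (ModuleCat.isZero_of_subsingleton M).eq_of_src _ _
  rw [h2, this, Ext.mk₀_zero, Ext.zero_comp, smul_zero]

lemma subsingleton_of_subsingleton_right {i : ℕ} {M N : ModuleCat.{0} R} [Subsingleton N] :
    Subsingleton (Abelian.Ext M N i) := by
  rw [subsingleton_iff_forall_eq 0]
  intro x
  have h2 : x = x.comp (Ext.mk₀ (𝟙 N)) (add_zero i) := by
    rw [Ext.comp_mk₀_id]
  have : 𝟙 N = 0 := (ModuleCat.isZero_of_subsingleton N).eq_of_src _ _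
  rw [h2, this, Ext.mk₀_zero, Ext.comp_zero]

lemma coheight_top [IsLocalRing R] (q : PrimeSpectrum R) (h : Order.coheight q ≤ (0 : ℕ)) :
    q.asIdeal = maximalIdeal R := by
  by_contra hne
  rw [Order.coheight_le_coe_iff] at h
  have hlt : q < ⟨maximalIdeal R, inferInstance⟩ :=
    lt_of_le_of_ne (IsLocalRing.le_maximalIdeal q.2.ne_top)
      (fun e => hne (congrArg PrimeSpectrum.asIdeal e))
  exact absurd (h _ hlt) (by simp)

lemma filtr [IsNoetherianRing R] (Z : PrimeSpectrum R → Prop) (i : ℕ) (L : ModuleCat.{0} R)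
    (h : ∀ (N : Type) [AddCommGroup N] [Module R N] [Module.Finite R N] (p : PrimeSpectrum R),
      (N ≃ₗ[R] R ⧸ p.asIdeal) → Z p → Kills (1 : R) i (ModuleCat.of R N) L)
    (N : Type) [AddCommGroup N] [Module R N] [hfin : Module.Finite R N]
    (hN : ∀ q : PrimeSpectrum R, Module.annihilator R N ≤ q.asIdeal → Z q) :
    Kills (1 : R) i (ModuleCat.of R N) L := by
  revert hN
  refine IsNoetherianRing.induction_on_isQuotientEquivQuotientPrime R hfin
    (motive := fun N _ _ _ => (∀ q : PrimeSpectrum R, Module.annihilator R N ≤ q.asIdeal → Z q) →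
      Kills (1 : R) i (ModuleCat.of R N) L) ?_ ?_ ?_
  · intro N _ _ _ _ _
    exact kills_of_subsingleton_left
  · intro N _ _ _ p e hq
    exact h N p e (hq p (by rw [e.annihilator_eq, Ideal.annihilator_quotient]))
  · intro N₁ _ _ _ N₂ _ _ _ N₃ _ _ _ f g hf hg hfg h1 h3 hq
    have hS : (ModuleCat.shortComplexOfCompEqZero f g hfg.linearMap_comp_eq_zero).ShortExact :=
      ModuleCat.shortComplex_shortExact _ hfg hf hg
    have k1 := h1 fun q hq' => hq q ((f.annihilator_le_of_injective hf).trans hq')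
    have k3 := h3 fun q hq' => hq q ((g.annihilator_le_of_surjective hg).trans hq')
    have := kills_contra_mid hS k1 k3
    rwa [one_mul] at this

lemma ischebeck [IsNoetherianRing R] [IsLocalRing R] {d : ℕ}
    (h0 : ∀ j < d, Subsingleton (Abelian.Ext (ModuleCat.of R (ResidueField R))
      (ModuleCat.of R R) j)) (c : ℕ) :
    ∀ (N : Type) [AddCommGroup N] [Module R N] [Module.Finite R N],
      (∀ q : PrimeSpectrum R, Module.annihilator R N ≤ q.asIdeal → Order.coheight q ≤ (c : ℕ∞)) →
      ∀ i, i + c < d → Kills (1 : R) i (ModuleCat.of R N) (ModuleCat.of R R) := by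
  induction c with
  | zero =>
    intro N _ _ hfin hN i hi
    refine filtr _ i _ ?_ N hN
    intro N _ _ _ p e hq
    have := coheight_top p hq
    obtain ⟨p, hp⟩ := p
    obtain rfl : p = maximalIdeal R := this
    exact kills_congr_left (M := ModuleCat.of R (ResidueField R)) e.symm.toModuleIso
        (kills_one_iff.mpr (h0 i hi))
  | succ c ih =>
    intro N _ _ hfin hN i hi
    refine filtr _ i _ ?_ N hN
    intro N _ _ _ p e hq
    by_cases hpm : p.asIdeal = maximalIdeal R
    · obtain ⟨p, hp⟩ := p
      obtain rfl : p = maximalIdeal R := hpm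
      exact kills_congr_left (M := ModuleCat.of R (ResidueField R)) e.symm.toModuleIso
        (kills_one_iff.mpr (h0 i (by omega)))
    · have hlt : p.asIdeal < maximalIdeal R :=
        lt_of_le_of_ne (IsLocalRing.le_maximalIdeal p.2.ne_top) hpm
      obtain ⟨x, hxm, hxp⟩ := SetLike.exists_of_lt hlt
      have hreg : IsSMulRegular N x := by
        rw [e.isSMulRegular_congr, isSMulRegular_iff_right_eq_zero_of_smul]
        intro y hy
        obtain ⟨y, rfl⟩ := Ideal.Quotient.mk_surjective y
        rw [← Ideal.Quotient.mk_eq_mk, ← Submodule.Quotient.mk_smul, Submodule.Quotient.mk_eq_zero,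
          smul_eq_mul] at hy
        exact Ideal.Quotient.eq_zero_iff_mem.mpr ((p.2.mem_or_mem hy).resolve_left hxp)
      refine kills_contra_regular (M := ModuleCat.of R N) hxm hreg fun n => ?_
      refine ih (QuotSMulTop (x ^ n) N) ?_ (i+1) (by omega)
      intro q hq'
      have hpq : p.asIdeal ≤ q.asIdeal := by
        refine le_trans ?_ hq'
        rw [← Ideal.annihilator_quotient (I := p.asIdeal), ← e.annihilator_eq]
        exact (Submodule.mkQ _).annihilator_le_of_surjective (Submodule.mkQ_surjective _)
      have hxq : x ∈ q.asIdeal := by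
        refine q.2.mem_of_pow_mem n (hq' ?_)
        rw [Module.mem_annihilator]
        intro y
        obtain ⟨y, rfl⟩ := Submodule.Quotient.mk_surjective _ y
        rw [← Submodule.Quotient.mk_smul, Submodule.Quotient.mk_eq_zero]
        exact Submodule.smul_mem_pointwise_smul _ _ _ trivial
      have hlt : p < q := lt_of_le_of_ne hpq (fun e => hxp (e ▸ hxq))
      have := (Order.coheight_le_coe_iff.mp hq) q hlt
      push_cast at this
      exact Order.le_of_lt_add_one this

/-- regular sequences in a prime of a CM local ring -/
lemma exists_reg [IsNoetherianRing R] [IsLocalRing R] {d : ℕ}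
    (hd : ringKrullDim R = (d : WithBot ℕ∞))
    (h0 : ∀ j < d, Subsingleton (Abelian.Ext (ModuleCat.of R (ResidueField R))
      (ModuleCat.of R R) j)) (p : Ideal R) [p.IsPrime] :
    ∃ rs : List R, (rs.length : ℕ∞) = p.height ∧ (∀ r ∈ rs, r ∈ p) ∧
      RingTheory.Sequence.IsWeaklyRegular R rs := by
  let P : PrimeSpectrum R := ⟨p, inferInstance⟩
  have hle : p.height + Order.coheight P ≤ (d : ℕ∞) := by
    have h1 := Order.krullDim_eq_iSup_height_add_coheight_of_nonempty (α := PrimeSpectrum R)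
    have h2 : Order.krullDim (PrimeSpectrum R) = ((d : ℕ∞) : WithBot ℕ∞) := hd
    rw [h2, WithBot.coe_inj] at h1
    rw [h1]
    have h3 : p.height = Order.height P := PrimeSpectrum.height_eq_orderHeight P
    rw [h3]
    exact le_iSup (fun a : PrimeSpectrum R => Order.height a + Order.coheight a) P
  obtain ⟨n, hn⟩ := ENat.ne_top_iff_exists.mp
    (ne_top_of_le_ne_top (ENat.natCast_ne_top d) (le_self_add.trans hle))
  obtain ⟨c, hc⟩ := ENat.ne_top_iff_exists.mp
    (ne_top_of_le_ne_top (ENat.natCast_ne_top d) (le_add_self.trans hle))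
  rw [← hn, ← hc] at hle
  have hle' : n + c ≤ d := by exact_mod_cast hle
  obtain ⟨rs, h1, h2, h3⟩ := ModuleCat.exists_isRegular_of_exists_subsingleton_ext p n
    (ModuleCat.of R R) (by
      have := Ideal.IsPrime.ne_top (I := p) inferInstance
      change p • (⊤ : Submodule R R) < ⊤
      rw [smul_eq_mul, Ideal.mul_top]
      exact this.lt_top) (ModuleCat.of R (R ⧸ p)) (by
      change Module.support R (R ⧸ p) = _
      rw [Module.support_eq_zeroLocus, Ideal.annihilator_quotient]) (fun i hi => by
      refine kills_one_iff.mp (ischebeck h0 c (R ⧸ p) ?_ i (by omega))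
      intro q hq
      rw [Ideal.annihilator_quotient] at hq
      rw [hc]
      exact Order.coheight_anti hq)
  exact ⟨rs, by rw [h1, hn], h2, h3.1⟩

lemma lemV (S : Type) [CommRing S] [IsNoetherianRing S] [IsLocalRing S] (M : Type) [AddCommGroup M]
    [Module S M] [Module.Finite S M] (rs : List S) (hm : ∀ r ∈ rs, r ∈ maximalIdeal S)
    (h : RingTheory.Sequence.IsWeaklyRegular M rs) : (rs.length : ℕ∞) ≤ moduleDepth S M := by
  rw [le_moduleDepth_iff]
  intro j hj
  rcases subsingleton_or_nontrivial M with hM | hM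
  · exact subsingleton_of_subsingleton_right
  · refine ModuleCat.subsingleton_ext_of_exists_isRegular (maximalIdeal S)
      (ModuleCat.of S (ResidueField S)) ?_ (ModuleCat.of S M) ?_ rs hm
      ((IsLocalRing.isRegular_iff_isWeaklyRegular_of_subset_maximalIdeal hm).mpr h) j hj
    · change Module.support S (S ⧸ maximalIdeal S) ⊆ _
      rw [Module.support_eq_zeroLocus, Ideal.annihilator_quotient]
    · change maximalIdeal S • (⊤ : Submodule S M) < ⊤
      refine lt_top_iff_ne_top.mpr fun e => ?_
      have := Submodule.eq_bot_of_le_smul_of_le_jacobson_bot (maximalIdeal S) (⊤ : Submodule S M)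
        Module.Finite.fg_top e.ge (IsLocalRing.maximalIdeal_le_jacobson ⊥)
      exact top_ne_bot this

lemma weaklyRegular_flat {S : Type} [CommRing S] {M : Type} [AddCommGroup M] [Module S M]
    [Module.Flat S M] {rs : List S} (h : RingTheory.Sequence.IsWeaklyRegular S rs) :
    RingTheory.Sequence.IsWeaklyRegular M rs := by
  rw [← (TensorProduct.lid S M).isWeaklyRegular_congr]
  exact h.isWeaklyRegular_rTensor

end Stmt6

namespace Stmt6
open Abelian Pointwise

variable {R : Type} [CommRing R]

/-- locally free on the punctured spectrum, with vanishing of low Ext from the residue field -/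
structure DD [IsLocalRing R] (t : ℕ) (X : Type) [AddCommGroup X] [Module R X] : Prop where
  fin : Module.Finite R X
  free : ∀ (p : Ideal R) [p.IsPrime], p ≠ maximalIdeal R →
      Module.Free (Localization.AtPrime p) (LocalizedModule p.primeCompl X)
  ext : ∀ j < t, Kills (1 : R) j (ModuleCat.of R (ResidueField R)) (ModuleCat.of R X)

lemma DD.of_tor [IsLocalRing R] {l : List R}
    (hl : ∀ p : Ideal R, p.IsPrime → (∀ x ∈ l, x ∈ p) → p = maximalIdeal R)
    (X : Type) [AddCommGroup X] [Module R X] [hX : Module.Finite R X] (h : TorL l X) :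
    DD (R := R) 0 X := by
  refine ⟨hX, ?_, fun j hj => absurd hj (Nat.not_lt_zero j)⟩
  intro p hp hne
  have : ∃ x ∈ l, x ∉ p := by
    by_contra hcon
    push Not at hcon
    exact hne (hl p hp hcon)
  obtain ⟨x, hxl, hxp⟩ := this
  obtain ⟨n, hn⟩ := h x hxl
  have : Subsingleton (LocalizedModule p.primeCompl X) := by
    rw [LocalizedModule.subsingleton_iff]
    intro m
    exact ⟨x ^ n, Submonoid.pow_mem p.primeCompl (show x ∈ p.primeCompl from hxp) n, hn m⟩
  infer_instance

lemma kills_cov_left_zero {S : ShortComplex (ModuleCat.{0} R)} (hS : S.ShortExact)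
    {K : ModuleCat.{0} R} {c : R} (h2 : Kills c 0 K S.X₂) :
    Kills c 0 K S.X₁ := by
  intro x
  have := hS.mono_f
  obtain ⟨f, rfl⟩ := Ext.homEquiv₀.symm.surjective x
  have h := h2 (Ext.mk₀ (f ≫ S.f))
  change c • Ext.mk₀ f = 0
  rw [← Ext.mk₀_smul] at h ⊢
  rw [Ext.mk₀_eq_zero_iff] at h ⊢
  rw [← cancel_mono S.f, Linear.smul_comp, h, Limits.zero_comp]

lemma proj_ker {S A B C : Type} [CommRing S] [AddCommGroup A] [AddCommGroup B] [AddCommGroup C]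
    [Module S A] [Module S B] [Module S C] [Module.Projective S B] [Module.Projective S C]
    (f : A →ₗ[S] B) (g : B →ₗ[S] C) (hf : Function.Injective f) (hfg : Function.Exact f g)
    (hg : Function.Surjective g) : Module.Projective S A := by
  obtain ⟨s, hs⟩ := Module.projective_lifting_property g LinearMap.id hg
  have h3 := hfg.split_tfae'.out 0 1
  obtain ⟨_, s', hs'⟩ := h3.mp ⟨hf, s, hs⟩
  exact Module.Projective.of_split _ s' hs'

section CM
variable [IsNoetherianRing R] [IsLocalRing R] {d : ℕ}
    (hd : ringKrullDim R = (d : WithBot ℕ∞))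
    (h0 : ∀ j < d, Subsingleton (Abelian.Ext (ModuleCat.of R (ResidueField R))
      (ModuleCat.of R R) j))
include hd h0

lemma DD.of_free (n : ℕ) : DD (R := R) d (Fin n → R) := by
  refine ⟨inferInstance, fun p hp _ =>
    Module.free_of_isLocalizedModule (S := p.primeCompl)
      (LocalizedModule.mkLinearMap p.primeCompl (Fin n → R)), fun j hj => ?_⟩
  obtain ⟨rs, h1, h2, h3⟩ := exists_reg hd h0 (maximalIdeal R)
  have h4 : rs.length = d := by
    have := IsLocalRing.maximalIdeal_height_eq_ringKrullDim (R := R)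
    rw [hd, ← h1] at this
    exact_mod_cast this
  have := lemV R (Fin n → R) rs h2 (weaklyRegular_flat h3)
  rw [le_moduleDepth_iff] at this
  exact kills_one_iff.mpr (this j (by omega))

lemma DD.ker {t n : ℕ} (ht : t < d) {X : Type} [AddCommGroup X] [Module R X]
    (hX : DD (R := R) t X) (f : (Fin n → R) →ₗ[R] X) (hf : Function.Surjective f) :
    DD (R := R) (t+1) (LinearMap.ker f) := by
  refine ⟨inferInstance, ?_, ?_⟩
  · intro p hp hne
    have := hX.free p hne
    have hex : Function.Exact (LocalizedModule.map p.primeCompl (LinearMap.ker f).subtype)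
        (LocalizedModule.map p.primeCompl f) := LocalizedModule.map_exact p.primeCompl (LinearMap.ker f).subtype f
      (LinearMap.exact_subtype_ker_map f)
    have hinj := LocalizedModule.map_injective p.primeCompl (LinearMap.ker f).subtype
      (Submodule.injective_subtype _)
    have hsurj := LocalizedModule.map_surjective p.primeCompl f hf
    have : Module.Free (Localization.AtPrime p) (LocalizedModule p.primeCompl (Fin n → R)) :=
      Module.free_of_isLocalizedModule (S := p.primeCompl)
        (LocalizedModule.mkLinearMap p.primeCompl (Fin n → R))
    have : Module.Projective (Localization.AtPrime p)
      (LocalizedModule p.primeCompl (LinearMap.ker f)) :=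
      proj_ker (A := LocalizedModule p.primeCompl (LinearMap.ker f)) (LocalizedModule.map p.primeCompl (LinearMap.ker f).subtype)
        (LocalizedModule.map p.primeCompl f) hinj hex hsurj
    have : Module.Finite (Localization.AtPrime p)
      (LocalizedModule p.primeCompl (LinearMap.ker f)) := inferInstance
    exact Module.free_of_flat_of_isLocalRing
  · intro j hj
    have hS := LinearMap.shortExact_shortComplexKer hf
    have hF := DD.of_free hd h0 n
    cases j with
    | zero => exact kills_cov_left_zero hS (hF.ext 0 (by omega))
    | succ j =>
      have := kills_cov_left hS (hX.ext j (by omega)) (hF.ext (j+1) (by omega))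
      rwa [one_mul] at this

lemma DD.memCM0 {X : Type} [AddCommGroup X] [Module R X]
    (hX : DD (R := R) d X) : MemCM0 R (ModuleCat.of R X) := by
  refine ⟨hX.fin, ?_, fun p hp hne => hX.free p hne⟩
  intro p hp
  have := hX.fin
  change ringKrullDim (Localization.AtPrime p) ≤
      (moduleDepth (Localization.AtPrime p) (LocalizedModule p.primeCompl X) : WithBot ℕ∞)
  rw [IsLocalization.AtPrime.ringKrullDim_eq_height p (Localization.AtPrime p), WithBot.coe_le_coe]
  have hloc : ∀ r ∈ p, algebraMap R (Localization.AtPrime p) r ∈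
      maximalIdeal (Localization.AtPrime p) := fun r hr =>
    (IsLocalization.AtPrime.to_map_mem_maximal_iff _ p r).mpr hr
  have key : ∀ rs : List R, (rs.length : ℕ∞) = p.height → (∀ r ∈ rs, r ∈ p) →
      RingTheory.Sequence.IsWeaklyRegular (LocalizedModule p.primeCompl X)
        (rs.map (algebraMap R (Localization.AtPrime p))) →
      p.height ≤ moduleDepth (Localization.AtPrime p) (LocalizedModule p.primeCompl X) := by
    intro rs h1 h2 h3
    have := lemV (Localization.AtPrime p) (LocalizedModule p.primeCompl X) _ (by
      intro r hr
      obtain ⟨r', hr', rfl⟩ := List.mem_map.mp hr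
      exact hloc r' (h2 r' hr')) h3
    rwa [List.length_map, h1] at this
  by_cases hpm : p = maximalIdeal R
  · have hht : p.height = (d : ℕ∞) := by
      have := IsLocalRing.maximalIdeal_height_eq_ringKrullDim (R := R)
      rw [hd, ← hpm] at this
      exact_mod_cast this
    rcases subsingleton_or_nontrivial X with hs | hs
    · rw [hht, le_moduleDepth_iff]
      intro j hj
      have : Subsingleton (LocalizedModule p.primeCompl X) := by
        rw [LocalizedModule.subsingleton_iff]
        exact fun m => ⟨1, one_mem _, Subsingleton.elim _ _⟩
      exact subsingleton_of_subsingleton_right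
    · obtain ⟨rs, h1, h2, h3⟩ := ModuleCat.exists_isRegular_of_exists_subsingleton_ext
        (maximalIdeal R) d (ModuleCat.of R X) (by
          change maximalIdeal R • (⊤ : Submodule R X) < ⊤
          refine lt_top_iff_ne_top.mpr fun e => ?_
          have := Submodule.eq_bot_of_le_smul_of_le_jacobson_bot (maximalIdeal R)
            (⊤ : Submodule R X)
            Module.Finite.fg_top e.ge (IsLocalRing.maximalIdeal_le_jacobson ⊥)
          exact top_ne_bot this) (ModuleCat.of R (ResidueField R)) (by
          change Module.support R (R ⧸ maximalIdeal R) = _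
          rw [Module.support_eq_zeroLocus, Ideal.annihilator_quotient])
          (fun i hi => kills_one_iff.mp (hX.ext i hi))
      refine key rs (by rw [h1, hht]) (by rwa [hpm]) ?_
      exact RingTheory.Sequence.IsWeaklyRegular.of_isLocalizedModule (Localization.AtPrime p)
        p.primeCompl (LocalizedModule.mkLinearMap p.primeCompl X) h3.1
  · obtain ⟨rs, h1, h2, h3⟩ := exists_reg hd h0 p
    have := hX.free p hpm
    refine key rs h1 h2 (weaklyRegular_flat ?_)
    exact RingTheory.Sequence.IsWeaklyRegular.of_isLocalization _ p.primeCompl h3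

omit h0 in
lemma exists_list : ∃ l : List R, l.length = d ∧ (∀ x ∈ l, x ∈ maximalIdeal R) ∧
    ∀ p : Ideal R, p.IsPrime → (∀ x ∈ l, x ∈ p) → p = maximalIdeal R := by
  obtain ⟨s, hs, hc⟩ := Ideal.exists_finset_card_eq_height_of_isNoetherianRing (maximalIdeal R)
  refine ⟨s.toList, ?_, ?_, ?_⟩
  · have := IsLocalRing.maximalIdeal_height_eq_ringKrullDim (R := R)
    rw [hd, ← hc] at this
    rw [Finset.length_toList]
    exact_mod_cast this
  · intro x hx
    exact hs.1.2 (Ideal.subset_span (Finset.mem_toList.mp hx))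
  · intro p hp hx
    have hle : Ideal.span (s : Set R) ≤ p :=
      Ideal.span_le.mpr fun x hxs => hx x (Finset.mem_toList.mpr hxs)
    exact le_antisymm (IsLocalRing.le_maximalIdeal hp.ne_top)
      (hs.2 ⟨hp, hle⟩ (IsLocalRing.le_maximalIdeal hp.ne_top))

lemma kills_second (a : R)
    (h : ∀ i : ℕ, 0 < i → ∀ K L : ModuleCat.{0} R, MemCM0 R K → MemCM0 R L → Kills a i K L)
    (K : ModuleCat.{0} R) (hK : MemCM0 R K) (s : ℕ) :
    ∀ (t : ℕ), t + s = d → ∀ (L : Type) [AddCommGroup L] [Module R L], DD (R := R) t L →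
      ∀ i, 0 < i → Kills (a ^ (s + 1)) i K (ModuleCat.of R L) := by
  induction s with
  | zero =>
    intro t ht L _ _ hL i hi
    obtain rfl : t = d := ht
    rw [zero_add, pow_one]
    exact h i hi K _ hK (hL.memCM0 hd h0)
  | succ s ih =>
    intro t ht L _ _ hL i hi
    have := hL.fin
    obtain ⟨n, f, hf⟩ := Module.Finite.exists_fin' R L
    have h1 := ih (t+1) (by omega) _ (hL.ker hd h0 (by omega) f hf) (i+1) (by omega)
    have h2 := h i hi K _ hK ((DD.of_free hd h0 n).memCM0 hd h0)
    have := kills_cov_right (LinearMap.shortExact_shortComplexKer hf) h2 h1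
    rwa [← pow_succ'] at this

lemma kills_first (c : R) (L : ModuleCat.{0} R)
    (h : ∀ i : ℕ, 0 < i → ∀ K : ModuleCat.{0} R, MemCM0 R K → Kills c i K L)
    (s : ℕ) :
    ∀ (t : ℕ), t + s = d → ∀ (X : Type) [AddCommGroup X] [Module R X], DD (R := R) t X →
      ∀ i, s < i → Kills c i (ModuleCat.of R X) L := by
  induction s with
  | zero =>
    intro t ht X _ _ hX i hi
    obtain rfl : t = d := ht
    exact h i hi _ (hX.memCM0 hd h0)
  | succ s ih =>
    intro t ht X _ _ hX i hi
    have := hX.fin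
    obtain ⟨n, f, hf⟩ := Module.Finite.exists_fin' R X
    obtain ⟨i, rfl⟩ : ∃ j, i = j + 1 := ⟨i - 1, by omega⟩
    have h1 := ih (t+1) (by omega) _ (hX.ker hd h0 (by omega) f hf) i (by omega)
    have : Projective f.shortComplexKer.X₂ :=
      (IsProjective.iff_projective (R := R) (Fin n → R)).mp inferInstance
    exact kills_shift (LinearMap.shortExact_shortComplexKer hf) h1

lemma main (a : R)
    (h : ∀ i : ℕ, 0 < i → ∀ K L : ModuleCat.{0} R, MemCM0 R K → MemCM0 R L → Kills a i K L)
    (M N : ModuleCat.{0} R) (hM : Module.Finite R M) (hN : Module.Finite R N) (i : ℕ)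
    (hi : d < i) : Kills (a ^ (2 ^ (2 * d) * (d + 1))) i M N := by
  obtain ⟨l, hlen, hlm, hl⟩ := exists_list (R := R) hd
  have base : ∀ X L : ModuleCat.{0} R, Module.Finite R X → Module.Finite R L → TorL l X →
      TorL l L → ∀ i, d < i → Kills (a ^ (d + 1)) i X L := by
    intro X L _ _ tX tL i hi
    refine kills_first hd h0 _ L ?_ d 0 (zero_add d) X (DD.of_tor hl X tX) i hi
    intro i hi K hK
    exact kills_second hd h0 a h K hK d 0 (zero_add d) L (DD.of_tor hl L tL) i hi
  have s1 := devissage (R := R) (fun c N => ∀ X : ModuleCat.{0} R, Module.Finite R X → TorL l X →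
      ∀ i, d < i → Kills c i X N)
    (fun S c hS _ _ _ q1 q3 X hX tX i hi => kills_cov_mid hS (q1 X hX tX i hi) (q3 X hX tX i hi))
    (fun N c x hN hx hr q X hX tX i hi =>
      kills_cov_regular hx hr fun n => q n X hX tX i hi)
    l hlm (a ^ (d+1)) (fun L hL tL X hX tX i hi => base X L hX hL tX tL i hi)
  have s2 := devissage (R := R) (fun c M => ∀ N : ModuleCat.{0} R, Module.Finite R N →
      ∀ i, d < i → Kills c i M N)
    (fun S c hS _ _ _ q1 q3 X hX i hi => kills_contra_mid hS (q1 X hX i hi) (q3 X hX i hi))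
    (fun M c x hM hx hr q N hN i hi =>
      kills_contra_regular hx hr fun n => q n N hN (i+1) (by omega))
    l hlm ((a ^ (d+1)) ^ 2 ^ l.length) (fun X hX tX N hN i hi => s1 N hN X hX tX i hi)
  have := s2 M hM N hN i hi
  have e : a ^ (2 ^ (2 * d) * (d + 1)) = ((a ^ (d+1)) ^ 2 ^ l.length) ^ 2 ^ l.length := by
    rw [← pow_mul, ← pow_mul, hlen]
    congr 1
    ring
  rwa [e]

end CM
end Stmt6

/-- Let `R` be a Cohen-Macaulay noetherian local ring of Krull dimension `d`
and let `a ∈ R` annihilate `Ext^i(K,L)` for all `i > 0` and all `K, L ∈ CM₀(R)`. Then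
`a^(2^(2d)·(d+1)) · Ext^i(M,N) = 0` for all `i > d` and all finitely generated `M, N`. -/
theorem stmt6 (R : Type) [CommRing R] [IsNoetherianRing R] [IsLocalRing R]
    (hCM : IsCMLocalRing R) (d : ℕ) (hd : ringKrullDim R = (d : WithBot ℕ∞)) (a : R)
    (h : ∀ i : ℕ, 0 < i → ∀ K L : ModuleCat.{0} R, MemCM0 R K → MemCM0 R L →
        ∀ x : ExtMod R i K L, a • x = 0) :
    ∀ i : ℕ, d < i → ∀ M N : ModuleCat.{0} R, Module.Finite R M → Module.Finite R N →
      ∀ x : ExtMod R i M N, (a ^ (2 ^ (2 * d) * (d + 1))) • x = 0 := by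
  have h0 : ∀ j < d, Subsingleton (Abelian.Ext (ModuleCat.of R (ResidueField R))
      (ModuleCat.of R R) j) := by
    rw [← Stmt6.le_moduleDepth_iff]
    have h1 : (moduleDepth R R : WithBot ℕ∞) = ((d : ℕ∞) : WithBot ℕ∞) := hCM.trans hd
    rw [WithBot.coe_inj] at h1
    exact h1.ge
  intro i hi M N hM hN
  rw [Stmt6.bridge]
  exact Stmt6.main hd h0 a
    (fun i hi K L hK hL => (Stmt6.bridge a i K L).mp (h i hi K L hK hL)) M N hM hN i hi

end
end

section
/- Let R be a Cohen-Macaulay commutative noetherian local ring. Then every prime ideal p of R such that R_p is not a regular local ring contains the ideal ⋂ Ann_R Tor_i^R(K,L), where the intersection ranges over all integers i > 0 and all modules K, L in CM_0(R). Equivalently, the singular locus Sing R is contained in V(⋂_{i>0, K,L ∈ CM_0(R)} Ann_R Tor_i^R(K,L)). -/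
open CategoryTheory IsLocalRing

noncomputable section

set_option linter.all false

open TensorProduct

namespace S7

section
variable {R : Type} [CommRing R]
variable {K F N L G M K' F' : Type} [AddCommGroup K] [Module R K] [AddCommGroup F] [Module R F]
  [AddCommGroup N] [Module R N] [AddCommGroup L] [Module R L] [AddCommGroup G] [Module R G]
  [AddCommGroup M] [Module R M] [AddCommGroup K'] [Module R K'] [AddCommGroup F'] [Module R F']

/-- `a` kills the kernel of `M ⊗ K → M ⊗ F`. -/
def KP (a : R) (M : Type) [AddCommGroup M] [Module R M] (i : K →ₗ[R] F) : Prop :=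
  ∀ z : M ⊗[R] K, i.lTensor M z = 0 → a • z = 0

theorem lr_comm {A B C D : Type} [AddCommGroup A] [Module R A] [AddCommGroup B] [Module R B]
    [AddCommGroup C] [Module R C] [AddCommGroup D] [Module R D] (f : A →ₗ[R] B) (g : C →ₗ[R] D)
    (x : A ⊗[R] C) : g.lTensor B (f.rTensor C x) = f.rTensor D (g.lTensor A x) := by
  rw [← LinearMap.comp_apply, ← LinearMap.comp_apply, LinearMap.lTensor_comp_rTensor,
    LinearMap.rTensor_comp_lTensor]

theorem KP_symm (a : R) (i : K →ₗ[R] F) (p : F →ₗ[R] N)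
    (hp : Function.Surjective p) (hip : Function.Exact i p)
    (j : L →ₗ[R] G) (q : G →ₗ[R] M) (hj : Function.Injective j)
    (hq : Function.Surjective q) (hjq : Function.Exact j q) [Module.Flat R F]
    (h : KP a M i) : KP a N j := by
  have key : ∀ z : L ⊗[R] N, j.rTensor N z = 0 → a • z = 0 := by
    intro z hz
    obtain ⟨z', rfl⟩ := LinearMap.lTensor_surjective L hp z
    rw [← lr_comm] at hz
    obtain ⟨y, hy⟩ := (lTensor_exact G hip hp _).1 hz
    have hv : i.lTensor M (q.rTensor K y) = 0 := by
      rw [lr_comm, hy]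
      exact (rTensor_exact F hjq hq _).2 ⟨z', rfl⟩
    have h2 := h _ hv
    rw [← map_smul] at h2
    obtain ⟨w, hw⟩ := (rTensor_exact K hjq hq _).1 h2
    have h3 : j.rTensor F (a • z') = j.rTensor F (i.lTensor L w) := by
      rw [← lr_comm, hw, map_smul, map_smul, hy]
    have h4 := Module.Flat.rTensor_preserves_injective_linearMap j hj h3
    rw [← map_smul, h4]
    exact (lTensor_exact L hip hp _).2 ⟨w, rfl⟩
  intro z hz
  have := key (TensorProduct.comm R N L z) (by
    rw [← LinearMap.comm_comp_lTensor_comp_comm_eq]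
    simp [hz])
  rw [← map_smul] at this
  exact (LinearEquiv.map_eq_zero_iff _).1 this

theorem KP_shift (a : R) (i : K →ₗ[R] F)
    (i' : K' →ₗ[R] F') (p' : F' →ₗ[R] K) (hi' : Function.Injective i')
    (hp' : Function.Surjective p') (hip' : Function.Exact i' p')
    (j : L →ₗ[R] G) (q : G →ₗ[R] M) (hj : Function.Injective j)
    (hq : Function.Surjective q) (hjq : Function.Exact j q) [Module.Flat R F] [Module.Flat R G]
    (h : KP a L i) : KP a M i' := by
  intro z hz
  obtain ⟨z', rfl⟩ := LinearMap.rTensor_surjective K' hq z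
  rw [lr_comm] at hz
  obtain ⟨y, hy⟩ := (rTensor_exact F' hjq hq _).1 hz
  have hv : i.lTensor L (p'.lTensor L y) = 0 := by
    apply Module.Flat.rTensor_preserves_injective_linearMap (M := F) j hj
    rw [map_zero, ← lr_comm, ← lr_comm, hy,
      (lTensor_exact G hip' hp' _).2 ⟨z', rfl⟩, map_zero]
  have h2 := h _ hv
  rw [← map_smul] at h2
  obtain ⟨w, hw⟩ := (lTensor_exact L hip' hp' _).1 h2
  have h3 : i'.lTensor G (a • z') = i'.lTensor G (j.rTensor K' w) := by
    rw [lr_comm, hw, map_smul, map_smul, hy]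
  have h4 := Module.Flat.lTensor_preserves_injective_linearMap i' hi' h3
  rw [← map_smul, h4]
  exact (rTensor_exact K' hjq hq _).2 ⟨w, rfl⟩

theorem exact_ker {A B : Type} [AddCommGroup A] [Module R A] [AddCommGroup B] [Module R B]
    (f : A →ₗ[R] B) : Function.Exact (LinearMap.ker f).subtype f := by
  rw [LinearMap.exact_iff]; simp

/-- `a` kills `Tor_1(M,N)`. -/
def KT (a : R) (M N : Type) [AddCommGroup M] [Module R M] [AddCommGroup N] [Module R N] : Prop :=
  ∀ (F : Type) [AddCommGroup F] [Module R F] [Module.Flat R F] (p : F →ₗ[R] N),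
    Function.Surjective p → KP a M (LinearMap.ker p).subtype

theorem KT_symm {a : R} (h : KT a M N) : KT a N M := by
  intro G _ _ _ q hq
  exact KP_symm a _ (Finsupp.linearCombination R (id : N → N))
    (Finsupp.linearCombination_id_surjective R N) (exact_ker _) _ q
    (Submodule.injective_subtype _) hq (exact_ker _)
    (h _ _ (Finsupp.linearCombination_id_surjective R N))

theorem KT_of_KP {a : R} (i : K →ₗ[R] F) (p : F →ₗ[R] N)
    (hp : Function.Surjective p) (hip : Function.Exact i p) [Module.Flat R F]
    (h : KP a M i) : KT a M N := by
  apply KT_symm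
  intro G _ _ _ q hq
  exact KP_symm a i p hp hip _ q (Submodule.injective_subtype _) hq (exact_ker _) h

theorem KT_shift {a : R} [Module.Flat R F] [Module.Flat R G] (p : F →ₗ[R] N)
    (q : G →ₗ[R] M) 
    (hp : Function.Surjective p)
    (hq : Function.Surjective q) (h : KT a (LinearMap.ker q) N) : KT a M (LinearMap.ker p) := by
  intro F' _ _ _ p' hp'
  exact KP_shift a (LinearMap.ker p).subtype _ p'
    (Submodule.injective_subtype _) hp' (exact_ker _)
    (LinearMap.ker q).subtype q (Submodule.injective_subtype _) hq (exact_ker _) (h F p hp)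

theorem KT_congr_right {N' : Type} [AddCommGroup N'] [Module R N'] {a : R} (e : N ≃ₗ[R] N')
    (h : KT a M N) : KT a M N' := by
  intro F _ _ _ p hp
  have := h F (e.symm.toLinearMap ∘ₗ p) (e.symm.surjective.comp hp)
  have hk : LinearMap.ker (e.symm.toLinearMap ∘ₗ p) = LinearMap.ker p := by
    ext; simp
  rwa [hk] at this

end

section limit
variable {R : Type} [CommRing R] [IsNoetherianRing R] [IsLocalRing R]
variable {M N : Type} [AddCommGroup M] [Module R M] [AddCommGroup N] [Module R N]
  [Module.Finite R M] [Module.Finite R N]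

theorem KT_limit {a : R}
    (h : ∀ n : ℕ, KT a (M ⧸ (maximalIdeal R ^ n • (⊤ : Submodule R M))) N) : KT a M N := by
  obtain ⟨m, p, hp⟩ := Module.Finite.exists_fin' R N
  refine KT_of_KP (LinearMap.ker p).subtype p hp (exact_ker _) ?_
  intro z hz
  have key : a • z ∈ (⨅ n : ℕ, maximalIdeal R ^ n • (⊤ : Submodule R (M ⊗[R] LinearMap.ker p))) := by
    rw [Submodule.mem_iInf]
    intro n
    have h1 := h n _ p hp
      ((maximalIdeal R ^ n • (⊤ : Submodule R M)).mkQ.rTensor (LinearMap.ker p) z) (by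
        rw [lr_comm, hz, map_zero])
    rw [← map_smul] at h1
    obtain ⟨w, hw⟩ := (rTensor_exact (LinearMap.ker p)
      (LinearMap.exact_subtype_mkQ (maximalIdeal R ^ n • (⊤ : Submodule R M)))
      (Submodule.mkQ_surjective _) _).1 h1
    rw [← hw]
    clear hw h1
    induction w using TensorProduct.induction_on with
    | zero => simp
    | add x y hx hy => rw [map_add]; exact Submodule.add_mem _ hx hy
    | tmul x y =>
      simp only [LinearMap.rTensor_tmul, Submodule.subtype_apply]
      obtain ⟨x, hx⟩ := x
      simp only
      induction hx using Submodule.smul_induction_on' with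
      | smul r hr m hm => 
        rw [← TensorProduct.smul_tmul']
        exact Submodule.smul_mem_smul hr trivial
      | add x hx y hy h1 h2 => rw [TensorProduct.add_tmul]; exact Submodule.add_mem _ h1 h2
  rw [Ideal.iInf_pow_smul_eq_bot_of_isLocalRing _ (Ideal.IsPrime.ne_top inferInstance)] at key
  simpa using key

end limit
end S7

namespace S7

theorem homology_kill {R : Type} [CommRing R] (S : ShortComplex (ModuleCat.{0} R)) (a : R)
    (h : ∀ x : S.homology, a • x = 0) (y : S.X₂) (hy : S.g y = 0) : ∃ w : S.X₁, S.f w = a • y := by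
  have h2 : ∀ x : S.moduleCatLeftHomologyData.H, a • x = 0 := by
    intro x
    have e := S.moduleCatHomologyIso.toLinearEquiv
    have := h (e.symm x)
    rw [← map_smul] at this
    exact (LinearEquiv.map_eq_zero_iff _).1 this
  have h3 := h2 ((LinearMap.range S.moduleCatToCycles).mkQ ⟨y, hy⟩)
  erw [← map_smul, Submodule.mkQ_apply, Submodule.Quotient.mk_eq_zero] at h3
  obtain ⟨w, hw⟩ := h3
  exact ⟨w, congrArg Subtype.val hw⟩

theorem KT_of_cx {R : Type} [CommRing R] {M N P0 P1 P2 : Type}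
    [AddCommGroup M] [Module R M] [AddCommGroup N] [Module R N]
    [AddCommGroup P0] [Module R P0] [AddCommGroup P1] [Module R P1] [AddCommGroup P2] [Module R P2]
    [Module.Flat R P0] (p : P0 →ₗ[R] N) (d1 : P1 →ₗ[R] P0) (d2 : P2 →ₗ[R] P1)
    (hp : Function.Surjective p) (he : Function.Exact d1 p) (hd : d1 ∘ₗ d2 = 0) (a : R)
    (h : ∀ y : M ⊗[R] P1, d1.lTensor M y = 0 → ∃ w, d2.lTensor M w = a • y) : KT a M N := by
  refine KT_of_KP (LinearMap.ker p).subtype p hp (exact_ker _) ?_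
  let d1' : P1 →ₗ[R] LinearMap.ker p := d1.codRestrict _ (fun x => (he _).2 ⟨x, rfl⟩)
  have hd1 : Function.Surjective d1' := by
    rintro ⟨x, hx⟩
    obtain ⟨y, hy⟩ := (he _).1 hx
    exact ⟨y, Subtype.ext hy⟩
  have hc : (LinearMap.ker p).subtype ∘ₗ d1' = d1 := by ext; rfl
  have hc2 : d1' ∘ₗ d2 = 0 := by
    ext x; exact LinearMap.congr_fun hd x
  intro z hz
  obtain ⟨y, rfl⟩ := LinearMap.lTensor_surjective M hd1 z
  rw [← LinearMap.comp_apply, ← LinearMap.lTensor_comp, hc] at hz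
  obtain ⟨w, hw⟩ := h y hz
  rw [← map_smul, ← hw, ← LinearMap.comp_apply, ← LinearMap.lTensor_comp, hc2]
  simp

theorem KT_of_ann {R : Type} [CommRing R] (M N : ModuleCat.{0} R) (a : R)
    (h : a ∈ Module.annihilator R (TorMod R 1 M N)) : KT a M N := by
  let P := projectiveResolution N
  let F := (MonoidalCategory.tensoringLeft (ModuleCat.{0} R)).obj M
  have e := P.isoLeftDerivedObj F 1
  let C := (F.mapHomologicalComplex (ComplexShape.down ℕ)).obj P.complex
  have hk : ∀ x : (C.sc' 2 1 0).homology, a • x = 0 := by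
    intro x
    let e' : ((F.leftDerived 1).obj N) ≃ₗ[R] _ :=
      (e ≪≫ (ShortComplex.homologyMapIso (C.isoSc' 2 1 0 (by simp) (by simp)))).toLinearEquiv
    have h0 : ∀ y : ((F.leftDerived 1).obj N), a • y = 0 := (Module.mem_annihilator.1 h)
    obtain ⟨y, rfl⟩ := e'.surjective x
    rw [← map_smul, h0, map_zero]
  have hk2 := homology_kill _ a hk
  have hpi : Function.Surjective (P.π.f 0).hom :=
    (ModuleCat.epi_iff_surjective _).1 inferInstance
  have hproj : Module.Projective R (P.complex.X 0) :=
    (IsProjective.iff_projective (R := R) _).2 (P.projective 0)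
  have he : Function.Exact (P.complex.d 1 0).hom (P.π.f 0).hom :=
    (ShortComplex.ShortExact.moduleCat_exact_iff_function_exact _).1 P.exact₀
  have hd : (P.complex.d 1 0).hom ∘ₗ (P.complex.d 2 1).hom = 0 := by
    rw [← ModuleCat.hom_comp, P.complex.d_comp_d]; rfl
  exact KT_of_cx (M := M) (N := N) (P.π.f 0).hom (P.complex.d 1 0).hom (P.complex.d 2 1).hom hpi he hd a
    hk2
end S7

namespace S7
universe u

theorem extMod_iff {R : Type} [CommRing R] (X Y : ModuleCat.{0} R) (n : ℕ) :
    Subsingleton (ExtMod R n X Y) ↔ Subsingleton (Abelian.Ext.{0} X Y n) := by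
  let P := projectiveResolution X
  let C := P.complex.linearYonedaObj R Y
  have e : ExtMod R n X Y ≅ C.homology n := P.isoExt n Y
  have h1 : Subsingleton (ExtMod R n X Y) ↔ C.ExactAt n := by
    rw [HomologicalComplex.exactAt_iff_isZero_homology, ← ModuleCat.isZero_iff_subsingleton]
    exact ⟨fun h => h.of_iso e.symm, fun h => h.of_iso e⟩
  rw [h1]
  match n with
  | 0 =>
    rw [HomologicalComplex.exactAt_iff' C 0 0 1 (by simp) (by simp),
      ShortComplex.moduleCat_exact_iff, Abelian.Ext.homEquiv₀.subsingleton_congr]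
    constructor
    · intro h
      refine ⟨fun f g => ?_⟩
      have hz : ∀ f : ((ChainComplex.single₀ (ModuleCat R)).obj X).X 0 ⟶ Y, f = 0 := by
        intro f
        have hh := h (P.π.f 0 ≫ f : P.complex.X 0 ⟶ Y) (by
          change P.complex.d 1 0 ≫ P.π.f 0 ≫ f = 0
          rw [P.complex_d_comp_π_f_zero_assoc]; exact Limits.zero_comp)
        obtain ⟨x, hx⟩ := hh
        have h0 : (C.d 0 0) = 0 := C.shape _ _ (by simp)
        have hx2 : P.π.f 0 ≫ f = 0 := by
          rw [← hx]
          change (C.d 0 0) x = 0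
          rw [h0]; rfl
        rw [← cancel_epi (P.π.f 0), hx2]; exact Limits.comp_zero.symm
      exact (hz f).trans (hz g).symm
    · intro h x hx
      refine ⟨0, ?_⟩
      rw [map_zero]
      have hx' : P.complex.d 1 0 ≫ (x : P.complex.X 0 ⟶ Y) = 0 := hx
      let g := P.exact₀.desc (x : P.complex.X 0 ⟶ Y) hx'
      have hg : P.π.f 0 ≫ g = (x : P.complex.X 0 ⟶ Y) := P.exact₀.g_desc _ hx'
      have : (g : X ⟶ Y) = 0 := Subsingleton.elim (α := (X ⟶ Y)) g 0
      rw [this] at hg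
      change (0 : P.complex.X 0 ⟶ Y) = x
      rw [← hg]
      exact Limits.comp_zero.symm
  | n + 1 =>
    rw [HomologicalComplex.exactAt_iff' C n (n+1) (n+2) (by simp) (by simp),
      ShortComplex.moduleCat_exact_iff]
    constructor
    · intro h
      have hz : ∀ f : Abelian.Ext.{0} X Y (n+1), f = 0 := by
        intro f
        obtain ⟨f, hf, rfl⟩ := P.extMk_surjective f (n+2) rfl
        rw [P.extMk_eq_zero_iff f (n+2) rfl hf n rfl]
        exact h f hf
      exact ⟨fun f g => by rw [hz f, hz g]⟩
    · intro h x hx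
      exact (P.extMk_eq_zero_iff x (n+2) rfl hx n rfl).1 (Subsingleton.elim _ _)

theorem le_moduleDepth_iff {S : Type} [CommRing S] [IsLocalRing S] (N : Type) [AddCommGroup N]
    [Module S N] (d : ℕ) : (d : ℕ∞) ≤ moduleDepth S N ↔
    ∀ i < d, Subsingleton (Abelian.Ext.{0} (ModuleCat.of S (ResidueField S))
      (ModuleCat.of S N) i) := by
  unfold moduleDepth
  rw [le_sInf_iff]
  constructor
  · intro h i hi
    rw [← extMod_iff]
    by_contra hc
    rw [not_subsingleton_iff_nontrivial] at hc
    have := h i ⟨i, rfl, hc⟩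
    have := Nat.cast_le.1 this
    omega
  · rintro h _ ⟨j, rfl, hj⟩
    by_contra hc
    have hj' : j < d := by
      by_contra h2
      exact hc (Nat.cast_le.2 (not_lt.1 h2))
    have := (extMod_iff _ _ _).2 (h j hj')
    exact not_subsingleton _ this

end S7

namespace S7

abbrev EV (R : Type) [CommRing R] (i : ℕ) (N M : Type) [AddCommGroup N] [Module R N]
    [AddCommGroup M] [Module R M] : Prop :=
  Subsingleton (Abelian.Ext.{0} (ModuleCat.of R N) (ModuleCat.of R M) i)

section
variable {R : Type} [CommRing R]

theorem EV_congr_left {N N' M : Type} [AddCommGroup N] [Module R N] [AddCommGroup N'] [Module R N']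
    [AddCommGroup M] [Module R M] {i : ℕ} (e : N ≃ₗ[R] N') (h : EV R i N' M) : EV R i N M := by
  constructor
  have key : ∀ x : Abelian.Ext.{0} (ModuleCat.of R N) (ModuleCat.of R M) i, x = 0 := by
    intro x
    have h1 : (Abelian.Ext.mk₀ e.toModuleIso.inv).comp x (zero_add i) = 0 := h.elim _ _
    have h2 : (Abelian.Ext.mk₀ e.toModuleIso.hom).comp
        ((Abelian.Ext.mk₀ e.toModuleIso.inv).comp x (zero_add i)) (zero_add i) = x := by
      rw [Abelian.Ext.mk₀_comp_mk₀_assoc, e.toModuleIso.hom_inv_id, Abelian.Ext.mk₀_id_comp]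
    rw [← h2, h1, Abelian.Ext.comp_zero]
  intro x y
  rw [key x, key y]

theorem EV_congr_right {N M' M : Type} [AddCommGroup N] [Module R N] [AddCommGroup M'] [Module R M']
    [AddCommGroup M] [Module R M] {i : ℕ} (e : M ≃ₗ[R] M') (h : EV R i N M') : EV R i N M := by
  constructor
  have key : ∀ x : Abelian.Ext.{0} (ModuleCat.of R N) (ModuleCat.of R M) i, x = 0 := by
    intro x
    have h1 : x.comp (Abelian.Ext.mk₀ e.toModuleIso.hom) (add_zero i) = 0 := h.elim _ _
    have h2 : (x.comp (Abelian.Ext.mk₀ e.toModuleIso.hom) (add_zero i)).comp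
        (Abelian.Ext.mk₀ e.toModuleIso.inv) (add_zero i) = x := by
      rw [Abelian.Ext.comp_assoc_of_third_deg_zero, Abelian.Ext.mk₀_comp_mk₀,
        e.toModuleIso.hom_inv_id, Abelian.Ext.comp_mk₀_id]
    rw [← h2, h1, Abelian.Ext.zero_comp]
  intro x y
  rw [key x, key y]

/-- middle vanishing, contravariant -/
theorem EV_mid {N₁ N₂ N₃ M : Type} [AddCommGroup N₁] [Module R N₁] [AddCommGroup N₂] [Module R N₂]
    [AddCommGroup N₃] [Module R N₃] [AddCommGroup M] [Module R M] {i : ℕ}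
    (f : N₁ →ₗ[R] N₂) (g : N₂ →ₗ[R] N₃) (hf : Function.Injective f) (hg : Function.Surjective g)
    (hfg : Function.Exact f g) (h1 : EV R i N₁ M) (h3 : EV R i N₃ M) : EV R i N₂ M := by
  let S : ShortComplex (ModuleCat.{0} R) := ShortComplex.mk (ModuleCat.ofHom f) (ModuleCat.ofHom g)
    (by ext x; exact hfg.apply_apply_eq_zero x)
  have hS : S.ShortExact := ModuleCat.shortComplex_shortExact S hfg hf hg
  constructor
  have key : ∀ x : Abelian.Ext.{0} (ModuleCat.of R N₂) (ModuleCat.of R M) i, x = 0 := by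
    intro x
    obtain ⟨y, hy⟩ := Abelian.Ext.contravariant_sequence_exact₂ hS (ModuleCat.of R M) x
      (h1.elim _ _)
    rw [← hy, (h3.elim y 0 : y = 0), Abelian.Ext.comp_zero]
  intro x y
  rw [key x, key y]

theorem ischebeck [IsNoetherianRing R] [IsLocalRing R] (M : Type) [AddCommGroup M] [Module R M]
    [Module.Finite R M] (t : ℕ) (ht : ∀ i < t, EV R i (ResidueField R) M) (n : ℕ) :
    ∀ (N : Type) [AddCommGroup N] [Module R N] [Module.Finite R N],
    (∀ q ∈ Module.support R N, Order.coheight q ≤ (n : ℕ∞)) → ∀ i, i + n < t → EV R i N M := by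
  induction n using Nat.strong_induction_on with
  | _ n IH =>
  intro N _ _ hN
  induction hN using IsNoetherianRing.induction_on_isQuotientEquivQuotientPrime R with
  | subsingleton N =>
    intro _ i hi
    have := Limits.IsZero.hasProjectiveDimensionLT_zero
      (ModuleCat.isZero_of_subsingleton (ModuleCat.of R N))
    exact HasProjectiveDimensionLT.subsingleton (ModuleCat.of R N) 0 i (Nat.zero_le i) _
  | exact N₁ N₂ N₃ f g hf hg hfg h1 h3 =>
    intro hs i hi
    rw [Module.support_of_exact hfg hf hg] at hs
    exact EV_mid f g hf hg hfg (h1 (fun q hq => hs q (Or.inl hq)) i hi)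
      (h3 (fun q hq => hs q (Or.inr hq)) i hi)
  | quotient N p e =>
    intro hs i hi
    have hsupp : ∀ q, q ∈ Module.support R N ↔ p ≤ q := by
      intro q
      rw [e.support_eq, Module.support_eq_zeroLocus, Ideal.annihilator_quotient]
      rfl
    by_cases hp : p.asIdeal = maximalIdeal R
    · have e2 : (R ⧸ p.asIdeal) ≃ₗ[R] ResidueField R :=
        (Submodule.quotEquivOfEq p.asIdeal (maximalIdeal R) hp :
          (R ⧸ p.asIdeal) ≃ₗ[R] (R ⧸ maximalIdeal R))
      exact EV_congr_left (e.trans e2) (ht i (by omega))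
    · have hlt : ¬ maximalIdeal R ≤ p.asIdeal := fun h =>
        hp (le_antisymm (le_maximalIdeal p.2.ne_top) h)
      obtain ⟨x, hxm, hxp⟩ := SetLike.not_le_iff_exists.mp hlt
      have reg : IsSMulRegular N x := by
        have h1 : IsSMulRegular (R ⧸ p.asIdeal) x := by
          intro a b hab
          have : (Ideal.Quotient.mk p.asIdeal x) * a = (Ideal.Quotient.mk p.asIdeal x) * b := hab
          refine mul_left_cancel₀ ?_ this
          rwa [Ne, Ideal.Quotient.eq_zero_iff_mem]
        exact (e.isSMulRegular_congr x).mpr h1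
      have hfinp : Order.coheight p ≤ (n : ℕ∞) := hs p ((hsupp p).2 le_rfl)
      have hq : ∀ q ∈ Module.support R (QuotSMulTop x N), Order.coheight q + 1 ≤ (n : ℕ∞) := by
        intro q hq
        rw [Module.support_quotSMulTop] at hq
        have h1 := (hsupp q).1 hq.1
        have h2 : x ∈ q.asIdeal := by simpa using hq.2
        have : p < q := lt_of_le_of_ne h1 (by rintro rfl; exact hxp h2)
        exact (Order.coheight_add_one_le this).trans hfinp
      have hn : n ≠ 0 := by
        rintro rfl
        have := hq ⟨maximalIdeal R, inferInstance⟩ (by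
          rw [Module.support_quotSMulTop]
          refine ⟨(hsupp _).2 (le_maximalIdeal p.2.ne_top), by simpa using hxm⟩)
        simp at this
      obtain ⟨m, rfl⟩ := Nat.exists_eq_succ_of_ne_zero hn
      have hE : EV R (i+1) (QuotSMulTop x N) M := by
        refine IH m (by omega) (QuotSMulTop x N) (fun q h => ?_) (i+1) (by omega)
        have := hq q h
        push_cast at this
        exact (ENat.add_le_add_iff_right (by simp)).1 this
      have hS := IsSMulRegular.smulShortComplex_shortExact (M := ModuleCat.of R N) reg
      by_contra hns
      have ntr : Nontrivial (Abelian.Ext.{0} (ModuleCat.of R N) (ModuleCat.of R M) i) :=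
        not_subsingleton_iff_nontrivial.mp hns
      have : x ∈ (Module.annihilator R
          (Abelian.Ext.{0} (ModuleCat.of R N) (ModuleCat.of R M) i)).jacobson :=
        (IsLocalRing.maximalIdeal_le_jacobson _) hxm
      apply Submodule.top_ne_pointwise_smul_of_mem_jacobson_annihilator this
      rw [eq_comm, eq_top_iff]
      intro y hy
      obtain ⟨z, hz⟩ := Abelian.Ext.contravariant_sequence_exact₁ hS (ModuleCat.of R M) y
        (add_comm 1 i) (hE.elim _ _)
      have hg : ∀ z : Abelian.Ext.{0} (ModuleCat.of R N) (ModuleCat.of R M) i,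
          (Abelian.Ext.mk₀ (x • 𝟙 (ModuleCat.of R N))).comp z (zero_add i) = x • z := by
        intro z
        rw [Abelian.Ext.mk₀_smul, Abelian.Ext.smul_comp, Abelian.Ext.mk₀_id_comp]
      rw [hz.symm.trans (hg z)]
      exact Submodule.smul_mem_pointwise_smul _ _ ⊤ trivial


theorem supp_res (S : Type) [CommRing S] [IsLocalRing S] : Module.support S (ResidueField S) ⊆
    PrimeSpectrum.zeroLocus (maximalIdeal S) := by
  have : Module.support S (S ⧸ maximalIdeal S) ⊆ PrimeSpectrum.zeroLocus (maximalIdeal S) := by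
    rw [Module.support_eq_zeroLocus, Ideal.annihilator_quotient]
  exact this

theorem depth_localize [IsNoetherianRing R] [IsLocalRing R] (M : Type) [AddCommGroup M] [Module R M]
    [Module.Finite R M] (t : ℕ) (ht : ∀ i < t, EV R i (ResidueField R) M)
    (q : Ideal R) [hq : q.IsPrime] (n : ℕ)
    (hn : Order.coheight (⟨q, hq⟩ : PrimeSpectrum R) ≤ (n : ℕ∞)) (i : ℕ) (hi : i + n < t) :
    EV (Localization.AtPrime q) i (ResidueField (Localization.AtPrime q))
      (LocalizedModule q.primeCompl M) := by
  have zero : ∀ (S : Type) [CommRing S] (A B : Type) [AddCommGroup A] [Module S A]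
      [AddCommGroup B] [Module S B] [Subsingleton B], EV S i A B := by
    intro S _ A B _ _ _ _ _
    have hB := ModuleCat.isZero_of_subsingleton (ModuleCat.of S B)
    constructor
    have key : ∀ x : Abelian.Ext.{0} (ModuleCat.of S A) (ModuleCat.of S B) i, x = 0 := by
      intro x
      rw [← Abelian.Ext.comp_mk₀_id x, (Limits.IsZero.iff_id_eq_zero _).1 hB, Abelian.Ext.mk₀_zero,
        Abelian.Ext.comp_zero]
    intro x y
    rw [key x, key y]
  cases subsingleton_or_nontrivial (LocalizedModule q.primeCompl M) with
  | inl h => exact zero _ _ _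
  | inr h =>
  have : Nontrivial M := by
    by_contra hM
    rw [not_nontrivial_iff_subsingleton] at hM
    exact not_subsingleton _ (inferInstance : Subsingleton (LocalizedModule q.primeCompl M))
  have hlt : q • (⊤ : Submodule R M) < ⊤ := by
    refine lt_of_le_of_ne le_top (Ne.symm ?_)
    apply Submodule.top_ne_ideal_smul_of_le_jacobson_annihilator
    exact (le_maximalIdeal hq.ne_top).trans (IsLocalRing.maximalIdeal_le_jacobson _)
  have hsup : Module.support R (R ⧸ q) = PrimeSpectrum.zeroLocus q := by
    rw [Module.support_eq_zeroLocus, Ideal.annihilator_quotient]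
  obtain ⟨rs, hlen, hmem, hreg⟩ := ModuleCat.exists_isRegular_of_exists_subsingleton_ext q (t - n)
    (ModuleCat.of R M) hlt (ModuleCat.of R (R ⧸ q)) hsup (fun j hj => by
      refine ischebeck M t ht n (R ⧸ q) (fun q' h' => ?_) j (by omega)
      rw [hsup] at h'
      exact (Order.coheight_anti (show (⟨q, hq⟩ : PrimeSpectrum R) ≤ q' from h')).trans hn)
  have hreg' := hreg.1.isRegular_of_isLocalizedModule_of_mem (Localization.AtPrime q) q
    (LocalizedModule.mkLinearMap q.primeCompl M) hmem
  refine ModuleCat.subsingleton_ext_of_exists_isRegular (maximalIdeal (Localization.AtPrime q))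
    (ModuleCat.of _ (ResidueField (Localization.AtPrime q))) ?_
    (ModuleCat.of _ (LocalizedModule q.primeCompl M)) ?_ _ ?_ hreg' i ?_
  · exact supp_res _
  · refine lt_of_le_of_ne le_top (Ne.symm ?_)
    apply Submodule.top_ne_ideal_smul_of_le_jacobson_annihilator
    exact (IsLocalRing.maximalIdeal_le_jacobson _)
  · intro r hr
    obtain ⟨s, hs, rfl⟩ := List.mem_map.mp hr
    exact (IsLocalization.AtPrime.to_map_mem_maximal_iff (Localization.AtPrime q) q s).2 (hmem s hs)
  · rw [List.length_map, hlen]; omega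

/-- depth of M at least dim R implies MCM -/
theorem isMCM_of [IsNoetherianRing R] [IsLocalRing R] (M : Type) [AddCommGroup M] [Module R M]
    [Module.Finite R M] (t : ℕ) (hdim : ringKrullDim R ≤ t)
    (ht : ∀ i < t, EV R i (ResidueField R) M) : IsMCMModule R M := by
  intro q hq
  rw [IsLocalization.AtPrime.ringKrullDim_eq_height q, WithBot.coe_le_coe]
  have h0 : Order.height (⟨q, hq⟩ : PrimeSpectrum R) + Order.coheight (⟨q, hq⟩ : PrimeSpectrum R)
      ≤ (t : ℕ∞) := by
    rw [ringKrullDim, Order.krullDim_eq_iSup_height_add_coheight_of_nonempty] at hdim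
    have hdim' : (⨆ a : PrimeSpectrum R, Order.height a + Order.coheight a) ≤ (t : ℕ∞) :=
      WithBot.coe_le_coe.1 hdim
    exact (le_iSup (fun a : PrimeSpectrum R => Order.height a + Order.coheight a) _).trans hdim'
  have h1 : q.height = Order.height (⟨q, hq⟩ : PrimeSpectrum R) :=
    PrimeSpectrum.height_eq_orderHeight ⟨q, hq⟩
  obtain ⟨c, hc⟩ := ENat.ne_top_iff_exists.1 (show Order.coheight (⟨q, hq⟩ : PrimeSpectrum R) ≠ ⊤ by
    intro h; rw [h] at h0; simp at h0)
  obtain ⟨b, hb⟩ := ENat.ne_top_iff_exists.1 (show Order.height (⟨q, hq⟩ : PrimeSpectrum R) ≠ ⊤ by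
    intro h; rw [h] at h0; simp at h0)
  rw [h1, ← hb, le_moduleDepth_iff]
  intro i hi
  rw [← hc, ← hb] at h0
  have h0' : b + c ≤ t := by exact_mod_cast h0
  exact depth_localize M t ht q c hc.ge i (by omega)

end
end S7

namespace S7

section
variable {R : Type} [CommRing R]

open Classical in
/-- a chosen first syzygy -/
def Om (M : ModuleCat.{0} R) : ModuleCat.{0} R :=
  if h : Module.Finite R M then
    ModuleCat.of R (LinearMap.ker (Module.Finite.exists_fin' R M).choose_spec.choose)
  else M

theorem Om_spec (M : ModuleCat.{0} R) [h : Module.Finite R M] :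
    ∃ (n : ℕ) (p : (Fin n → R) →ₗ[R] M), Function.Surjective p ∧
      Om M = ModuleCat.of R (LinearMap.ker p) := by
  refine ⟨_, (Module.Finite.exists_fin' R M).choose_spec.choose,
    (Module.Finite.exists_fin' R M).choose_spec.choose_spec, ?_⟩
  rw [Om, dif_pos h]

theorem Om_finite [IsNoetherianRing R] (M : ModuleCat.{0} R) [h : Module.Finite R M] :
    Module.Finite R (Om M) := by
  obtain ⟨n, p, -, hp⟩ := Om_spec M
  rw [hp]
  change Module.Finite R (LinearMap.ker p)
  infer_instance

theorem Omn_finite [IsNoetherianRing R] (M : ModuleCat.{0} R) [h : Module.Finite R M] (n : ℕ) :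
    Module.Finite R (Om^[n] M : ModuleCat.{0} R) := by
  induction n with
  | zero => exact h
  | succ n ih =>
    rw [Function.iterate_succ_apply']
    exact Om_finite _

theorem EV_pi (A : Type) [AddCommGroup A] [Module R A] (i m : ℕ) (h : EV R i A R) :
    EV R i A (Fin m → R) := by
  constructor
  have key : ∀ x : Abelian.Ext.{0} (ModuleCat.of R A) (ModuleCat.of R (Fin m → R)) i, x = 0 := by
    intro x
    let L : ((Fin m → R) →ₗ[R] (Fin m → R)) →+
        Abelian.Ext.{0} (ModuleCat.of R A) (ModuleCat.of R (Fin m → R)) i :=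
      AddMonoidHom.mk' (fun f => x.comp (Abelian.Ext.mk₀ (ModuleCat.ofHom f)) (add_zero i)) (by
        intro f g
        rw [ModuleCat.ofHom_add, Abelian.Ext.mk₀_add, Abelian.Ext.comp_add])
    have h1 : L LinearMap.id = x := by
      change x.comp (Abelian.Ext.mk₀ (𝟙 _)) (add_zero i) = x
      rw [Abelian.Ext.comp_mk₀_id]
    have h2 : (LinearMap.id : (Fin m → R) →ₗ[R] (Fin m → R)) =
        ∑ j : Fin m, (LinearMap.single R (fun _ => R) j) ∘ₗ (LinearMap.proj j) := by
      ext a b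
      simp [Pi.single_apply]
    rw [← h1, h2, map_sum]
    refine Finset.sum_eq_zero fun j _ => ?_
    change x.comp (Abelian.Ext.mk₀ (ModuleCat.ofHom (LinearMap.proj j) ≫
      ModuleCat.ofHom (LinearMap.single R (fun _ => R) j))) (add_zero i) = 0
    rw [← Abelian.Ext.mk₀_comp_mk₀, ← Abelian.Ext.comp_assoc_of_third_deg_zero]
    have h3 : x.comp (Abelian.Ext.mk₀ (ModuleCat.ofHom (LinearMap.proj j :
      (Fin m → R) →ₗ[R] R))) (add_zero i) = 0 := h.elim _ _
    rw [h3, Abelian.Ext.zero_comp]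
  intro x y
  rw [key x, key y]

theorem EV_ker (A : Type) [AddCommGroup A] [Module R A] {F N : Type} [AddCommGroup F] [Module R F]
    [AddCommGroup N] [Module R N] (p : F →ₗ[R] N) (hp : Function.Surjective p) (i : ℕ)
    (h : EV R i A F) (h' : ∀ j, j + 1 = i → EV R j A N) : EV R i A (LinearMap.ker p) := by
  have hS : p.shortComplexKer.ShortExact := LinearMap.shortExact_shortComplexKer hp
  constructor
  have key : ∀ x : Abelian.Ext.{0} (ModuleCat.of R A) (ModuleCat.of R (LinearMap.ker p)) i,
      x = 0 := by
    intro x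
    match i, h, h', x with
    | 0, h, _, x =>
      have hm : Mono p.shortComplexKer.f := hS.mono_f
      exact Abelian.Ext.postcomp_mk₀_injective_of_mono (ModuleCat.of R A) p.shortComplexKer.f
        (h.elim _ _)
    | i+1, h, h', x =>
      obtain ⟨y, hy⟩ := Abelian.Ext.covariant_sequence_exact₁ (ModuleCat.of R A) hS x
        (h.elim _ _) rfl
      rw [← hy, ((h' i rfl).elim y 0 : y = 0), Abelian.Ext.zero_comp]
  intro x y
  rw [key x, key y]

theorem EV_Om [IsNoetherianRing R] (A : Type) [AddCommGroup A] [Module R A] (d : ℕ)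
    (hd : ∀ i < d, EV R i A R) (N : ModuleCat.{0} R) [Module.Finite R N] (n : ℕ) :
    ∀ i < d, i < n → EV R i A (Om^[n] N : ModuleCat.{0} R) := by
  induction n with
  | zero => intro i _ h; omega
  | succ n ih =>
    intro i hi hin
    have := Omn_finite N n
    rw [Function.iterate_succ_apply']
    obtain ⟨m, p, hp, he⟩ := Om_spec (Om^[n] N : ModuleCat.{0} R)
    rw [he]
    exact EV_ker A p hp i (EV_pi A i m (hd i hi)) (fun j hj => ih j (by omega) (by omega))

theorem loc_seq (S : Submonoid R) {A B C : Type} [AddCommGroup A] [Module R A]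
    [AddCommGroup B] [Module R B] [AddCommGroup C] [Module R C] (f : A →ₗ[R] B) (g : B →ₗ[R] C)
    (hfg : Function.Exact f g) :
    Function.Exact (LocalizedModule.map S f) (LocalizedModule.map S g) :=
  LocalizedModule.map_exact S f g hfg

theorem free_ker {S : Type} [CommRing S] [IsLocalRing S] {A B C : Type} [AddCommGroup A]
    [Module S A] [AddCommGroup B] [Module S B] [AddCommGroup C] [Module S C]
    [Module.Free S B] [Module.Free S C] [Module.Finite S A] (f : A →ₗ[S] B) (g : B →ₗ[S] C)
    (hf : Function.Injective f) (hg : Function.Surjective g) (hfg : Function.Exact f g) :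
    Module.Free S A := by
  obtain ⟨l, hl⟩ := Module.projective_lifting_property g LinearMap.id hg
  have h01 : (Function.Injective f ∧ ∃ l, g ∘ₗ l = LinearMap.id) ↔
    (Function.Surjective g ∧ ∃ l, l ∘ₗ f = LinearMap.id) := hfg.split_tfae'.out 0 1
  obtain ⟨-, r, hr⟩ := h01.1 ⟨hf, l, hl⟩
  have : Module.Projective S A := Module.Projective.of_split _ r hr
  exact Module.free_of_flat_of_isLocalRing

theorem Om_loc_free [IsNoetherianRing R] (M : ModuleCat.{0} R) [Module.Finite R M] (q : Ideal R)
    [q.IsPrime]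
    (h : Module.Free (Localization.AtPrime q) (LocalizedModule q.primeCompl M)) :
    Module.Free (Localization.AtPrime q) (LocalizedModule q.primeCompl (Om M)) := by
  obtain ⟨m, p, hp, he⟩ := Om_spec M
  rw [he]
  change Module.Free (Localization.AtPrime q) (LocalizedModule q.primeCompl (LinearMap.ker p))
  have hex := loc_seq q.primeCompl (LinearMap.ker p).subtype p
    (LinearMap.exact_subtype_ker_map p)
  have hinj := LocalizedModule.map_injective q.primeCompl _ (LinearMap.ker p).injective_subtype
  have hsurj := LocalizedModule.map_surjective q.primeCompl p hp
  have hQ : Module.Free (Localization.AtPrime q)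
      (LocalizedModule q.primeCompl (Fin m → R)) :=
    Module.free_of_isLocalizedModule q.primeCompl
      (LocalizedModule.mkLinearMap q.primeCompl (Fin m → R))
  exact free_ker (S := Localization.AtPrime q) _ _ hinj hsurj hex

theorem Omn_loc_free [IsNoetherianRing R] (M : ModuleCat.{0} R) [Module.Finite R M] (q : Ideal R)
    [q.IsPrime]
    (h : Module.Free (Localization.AtPrime q) (LocalizedModule q.primeCompl M)) (n : ℕ) :
    Module.Free (Localization.AtPrime q)
      (LocalizedModule q.primeCompl (Om^[n] M : ModuleCat.{0} R)) := by
  induction n with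
  | zero => exact h
  | succ n ih =>
    have := Omn_finite M n
    rw [Function.iterate_succ_apply']
    exact Om_loc_free _ q ih

theorem loc_trunc_free [IsLocalRing R] (M : Type) [AddCommGroup M] [Module R M] (n : ℕ)
    (q : Ideal R) [hq : q.IsPrime] (hqm : q ≠ maximalIdeal R) :
    Module.Free (Localization.AtPrime q)
      (LocalizedModule q.primeCompl (M ⧸ (maximalIdeal R ^ n • (⊤ : Submodule R M)))) := by
  have hlt : ¬ maximalIdeal R ≤ q := fun h =>
        hqm (le_antisymm (le_maximalIdeal hq.ne_top) h)
  obtain ⟨x, hxm, hxp⟩ := SetLike.not_le_iff_exists.mp hlt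
  have : Subsingleton
      (LocalizedModule q.primeCompl (M ⧸ (maximalIdeal R ^ n • (⊤ : Submodule R M)))) := by
    rw [LocalizedModule.subsingleton_iff]
    intro y
    refine ⟨x ^ n, fun h => hxp (hq.mem_of_pow_mem n h), ?_⟩
    obtain ⟨y, rfl⟩ := Submodule.mkQ_surjective _ y
    rw [← map_smul, Submodule.mkQ_apply, Submodule.Quotient.mk_eq_zero]
    exact Submodule.smul_mem_smul (Ideal.pow_mem_pow hxm n) trivial
  infer_instance

theorem memCM0_Om [IsNoetherianRing R] [IsLocalRing R] (d : ℕ) (hdim : ringKrullDim R = d)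
    (hCM : IsCMLocalRing R) (M : Type) [AddCommGroup M] [Module R M] [Module.Finite R M] (n : ℕ) :
    MemCM0 R (Om^[d] (ModuleCat.of R (M ⧸ (maximalIdeal R ^ n • (⊤ : Submodule R M)))) :
      ModuleCat.{0} R) := by
  have hf := Omn_finite (ModuleCat.of R (M ⧸ (maximalIdeal R ^ n • (⊤ : Submodule R M)))) d
  refine ⟨hf, isMCM_of _ d hdim.le ?_, ?_⟩
  · intro i hi
    refine EV_Om (ResidueField R) d ?_ _ d i hi hi
    rw [← le_moduleDepth_iff]
    have h1 : ((moduleDepth R R : ℕ∞) : WithBot ℕ∞) = ringKrullDim R := hCM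
    rw [hdim] at h1
    exact (WithBot.coe_injective h1).ge
  · intro p hp hpm
    exact Omn_loc_free _ p (loc_trunc_free M n p hpm) d
end
end S7

namespace S7
section
variable {R : Type} [CommRing R] [IsNoetherianRing R]

theorem KT_Om {a : R} (M L : ModuleCat.{0} R) [Module.Finite R M] [Module.Finite R L]
    (h : KT a (Om M) L) : KT a M (Om L) := by
  obtain ⟨n, p, hp, e⟩ := Om_spec M
  obtain ⟨n', p', hp', e'⟩ := Om_spec L
  rw [e] at h
  rw [e']
  exact KT_shift p' p hp' hp h

theorem KT_iter {a : R} (n : ℕ) : ∀ (M L : ModuleCat.{0} R) [Module.Finite R M] [Module.Finite R L]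
    (_ : KT a (Om^[n] M : ModuleCat.{0} R) L), KT a M (Om^[n] L : ModuleCat.{0} R) := by
  induction n with
  | zero => intro M L _ _ h; exact h
  | succ n ih =>
    intro M L _ _ h
    rw [Function.iterate_succ_apply'] at h
    rw [Function.iterate_succ_apply]
    have := Omn_finite M n
    have := Om_finite L
    exact ih M (Om L) (KT_Om _ L h)

theorem KT_main [IsLocalRing R] {a : R} (d : ℕ) (M N : ModuleCat.{0} R) [Module.Finite R M] [Module.Finite R N]
    (h : ∀ n l : ℕ, KT a
      (Om^[d] (ModuleCat.of R (M ⧸ (maximalIdeal R ^ n • (⊤ : Submodule R M)))) : ModuleCat.{0} R)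
      (Om^[d] (ModuleCat.of R (N ⧸ (maximalIdeal R ^ l • (⊤ : Submodule R N)))) : ModuleCat.{0} R)) :
    KT a N (Om^[d] (Om^[d] M) : ModuleCat.{0} R) := by
  have := Omn_finite M d
  have := Omn_finite (Om^[d] M) d
  refine KT_limit fun l => ?_
  apply KT_iter (a := a) d (ModuleCat.of R (N ⧸ (maximalIdeal R ^ l • (⊤ : Submodule R N)))) (Om^[d] M)
  have := Omn_finite (ModuleCat.of R (N ⧸ (maximalIdeal R ^ l • (⊤ : Submodule R N)))) d
  apply KT_iter d _ M
  apply KT_symm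
  have := Omn_finite (Om^[d] (ModuleCat.of R (N ⧸ (maximalIdeal R ^ l • (⊤ : Submodule R N))))) d
  refine KT_limit fun n => ?_
  exact KT_iter d (ModuleCat.of R (M ⧸ (maximalIdeal R ^ n • (⊤ : Submodule R M)))) _ (h n l)

theorem mem_smul_of_tmul {p : Ideal R} {M : Type} [AddCommGroup M] [Module R M] (y : M)  :
    ((1 : R ⧸ p) ⊗ₜ[R] y = 0) ↔ y ∈ p • (⊤ : Submodule R M) := by
  rw [← (TensorProduct.quotTensorEquivQuotSMul M p).map_eq_zero_iff,
    ← map_one (Ideal.Quotient.mk p), TensorProduct.quotTensorEquivQuotSMul_mk_tmul, one_smul,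
    Submodule.Quotient.mk_eq_zero]

theorem mem_smul_localized (p : Ideal R) [p.IsPrime] {M : Type} [AddCommGroup M] [Module R M] (y : M)
    (s : p.primeCompl) :
    (LocalizedModule.mk y s ∈ maximalIdeal (Localization.AtPrime p) •
      (⊤ : Submodule (Localization.AtPrime p) (LocalizedModule p.primeCompl M))) ↔
      ∃ t : p.primeCompl, t • y ∈ p • (⊤ : Submodule R M) := by
  rw [← Localization.AtPrime.map_eq_maximalIdeal, ← Ideal.localized'_eq_map (Localization.AtPrime p) p.primeCompl,
    ← Submodule.localized'_top (Localization.AtPrime p) p.primeCompl (LocalizedModule.mkLinearMap p.primeCompl M),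
    ← Submodule.localized'_smul, Submodule.mem_localized']
  constructor
  · rintro ⟨m, hm, s', h⟩
    rw [← IsLocalizedModule.mk_eq_mk', LocalizedModule.mk_eq] at h
    obtain ⟨u, hu⟩ := h
    refine ⟨u * s', ?_⟩
    rw [mul_smul, ← hu, ← mul_smul]
    exact Submodule.smul_mem _ ((u * s : p.primeCompl) : R) hm
  · rintro ⟨t, h⟩
    refine ⟨_, h, t * s, ?_⟩
    rw [← IsLocalizedModule.mk_eq_mk', LocalizedModule.mk_eq]
    exact ⟨1, by rw [smul_smul s t y, mul_comm]⟩

theorem loc_free {a : R} (p : Ideal R) [p.IsPrime] (ha : a ∉ p) (M : Type) [AddCommGroup M] [Module R M]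
    [Module.Finite R M] (h : KT a (R ⧸ p) M) :
    Module.Free (Localization.AtPrime p) (LocalizedModule p.primeCompl M) := by
  obtain ⟨n, g, hg⟩ := Module.Finite.exists_fin' R M
  have h1 := h _ g hg
  set K := LinearMap.ker g with hK
  have hfg := loc_seq p.primeCompl K.subtype g (exact_ker g)
  have : Module.Free (Localization.AtPrime p) (LocalizedModule p.primeCompl (Fin n → R)) :=
    Module.free_of_isLocalizedModule p.primeCompl (LocalizedModule.mkLinearMap p.primeCompl (Fin n → R))
  have : Module.Finite (Localization.AtPrime p) (LocalizedModule p.primeCompl (Fin n → R)) :=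
    Module.Finite.of_isLocalizedModule p.primeCompl (LocalizedModule.mkLinearMap p.primeCompl (Fin n → R))
  have : Module.Finite (Localization.AtPrime p) (LocalizedModule p.primeCompl M) :=
    Module.Finite.of_isLocalizedModule p.primeCompl (LocalizedModule.mkLinearMap p.primeCompl M)
  have : Module.FinitePresentation (Localization.AtPrime p) (LocalizedModule p.primeCompl M) :=
    Module.finitePresentation_of_finite _ _
  refine Module.free_of_lTensor_residueField_injective _ _ ?_ hfg ?_
  · exact LocalizedModule.map_surjective p.primeCompl g hg
  rw [injective_iff_map_eq_zero]
  intro z hz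
  obtain ⟨y, rfl⟩ := TensorProduct.mk_surjective _ _ _ Ideal.Quotient.mk_surjective z
  have key : ∀ {M : Type} [AddCommGroup M] [Module R M] (y : LocalizedModule p.primeCompl M),
      ((1 : ResidueField (Localization.AtPrime p)) ⊗ₜ[Localization.AtPrime p] y = 0) ↔
      y ∈ maximalIdeal (Localization.AtPrime p) •
      (⊤ : Submodule (Localization.AtPrime p) (LocalizedModule p.primeCompl M)) := by
    intro M _ _ y
    have := LinearMap.ker_tensorProductMk (R := Localization.AtPrime p) (Q := LocalizedModule p.primeCompl M) (I := maximalIdeal (Localization.AtPrime p))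
    rw [← this]; rfl
  induction y using LocalizedModule.induction_on with
  | _ y s
  rw [TensorProduct.mk_apply, LinearMap.lTensor_tmul, key, LocalizedModule.map_mk, mem_smul_localized] at hz
  rw [TensorProduct.mk_apply, key, mem_smul_localized]
  obtain ⟨t, ht⟩ := hz
  have h2 := h1 (1 ⊗ₜ (t • y)) (by
    rw [LinearMap.lTensor_tmul, mem_smul_of_tmul]
    exact ht)
  rw [← TensorProduct.tmul_smul, mem_smul_of_tmul] at h2
  refine ⟨⟨a, ha⟩ * t, ?_⟩
  rw [mul_smul]
  exact h2
end
end S7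

namespace S7
section
variable {S : Type} [CommRing S] {A B C : Type} [AddCommGroup A] [Module S A] [AddCommGroup B] [Module S B]
   [AddCommGroup C] [Module S C]

/-- projective dimension less than `n` -/
def PD (S : Type) [CommRing S] (n : ℕ) (A : Type) [AddCommGroup A] [Module S A] : Prop :=
  HasProjectiveDimensionLT (ModuleCat.of S A) n

theorem PD_mono {n m : ℕ} (h : n ≤ m) (hA : PD S n A) : PD S m A := by
  have : HasProjectiveDimensionLT (ModuleCat.of S A) n := hA
  exact hasProjectiveDimensionLT_of_ge _ n m h

theorem PD_one_iff : PD S 1 A ↔ Module.Projective S A := by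
  rw [IsProjective.iff_projective (R := S) A]
  exact projective_iff_hasProjectiveDimensionLT_one.symm

theorem PD_of_free (h : Module.Free S A) : PD S 1 A := PD_one_iff.2 inferInstance

theorem PD_retract {n : ℕ} (i : A →ₗ[S] B) (r : B →ₗ[S] A) (h : r ∘ₗ i = LinearMap.id)
    (hB : PD S n B) : PD S n A := by
  have : HasProjectiveDimensionLT (ModuleCat.of S B) n := hB
  exact Retract.hasProjectiveDimensionLT (X := ModuleCat.of S A) (Y := ModuleCat.of S B)
    ⟨ModuleCat.ofHom i, ModuleCat.ofHom r, by rw [← ModuleCat.ofHom_comp, h]; rfl⟩ n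

theorem PD_congr {n : ℕ} (e : A ≃ₗ[S] B) (hB : PD S n A) : PD S n B :=
  PD_retract e.symm.toLinearMap e.toLinearMap (by ext; simp) hB

theorem PD_ses_iff (n : ℕ) [Module.Projective S B] (f : A →ₗ[S] B) (g : B →ₗ[S] C) (hf : Function.Injective f)
    (hg : Function.Surjective g) (hfg : Function.Exact f g) :
    PD S (n + 2) C ↔ PD S (n + 1) A := by
  let T : ShortComplex (ModuleCat.{0} S) := ShortComplex.mk (ModuleCat.ofHom f) (ModuleCat.ofHom g)
    (by rw [← ModuleCat.ofHom_comp, hfg.linearMap_comp_eq_zero]; rfl)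
  have hT : T.ShortExact := ModuleCat.shortComplex_shortExact T hfg hf hg
  exact hT.hasProjectiveDimensionLT_X₃_iff n (inferInstanceAs (Projective (ModuleCat.of S B)))

theorem PD_X3 (n : ℕ) (f : A →ₗ[S] B) (g : B →ₗ[S] C) (hf : Function.Injective f)
    (hg : Function.Surjective g) (hfg : Function.Exact f g) (hA : PD S n A) (hB : PD S (n+1) B) :
    PD S (n + 1) C := by
  let T : ShortComplex (ModuleCat.{0} S) := ShortComplex.mk (ModuleCat.ofHom f) (ModuleCat.ofHom g)
    (by rw [← ModuleCat.ofHom_comp, hfg.linearMap_comp_eq_zero]; rfl)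
  have hT : T.ShortExact := ModuleCat.shortComplex_shortExact T hfg hf hg
  exact hT.hasProjectiveDimensionLT_X₃ n hA hB

end

section
variable {R : Type} [CommRing R] [IsNoetherianRing R]

theorem PD_loc_Om (p : Ideal R) [p.IsPrime] (M : ModuleCat.{0} R) [Module.Finite R M] (n : ℕ)
    (h : PD (Localization.AtPrime p) (n + 1) (LocalizedModule p.primeCompl (Om M))) :
    PD (Localization.AtPrime p) (n + 2) (LocalizedModule p.primeCompl M) := by
  obtain ⟨m, g, hg, e⟩ := Om_spec M
  rw [e] at h
  have : Module.Free (Localization.AtPrime p) (LocalizedModule p.primeCompl (Fin m → R)) :=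
    Module.free_of_isLocalizedModule p.primeCompl (LocalizedModule.mkLinearMap p.primeCompl (Fin m → R))
  exact (PD_ses_iff n _ _ (LocalizedModule.map_injective p.primeCompl (LinearMap.ker g).subtype
    (Submodule.injective_subtype _))
    (LocalizedModule.map_surjective p.primeCompl g hg)
    (loc_seq p.primeCompl _ g (exact_ker g))).2 h

theorem PD_loc_Omn (p : Ideal R) [p.IsPrime] (k : ℕ) : ∀ (M : ModuleCat.{0} R) [Module.Finite R M] (n : ℕ)
    (_ : PD (Localization.AtPrime p) (n + 1) (LocalizedModule p.primeCompl (Om^[k] M : ModuleCat.{0} R))),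
    PD (Localization.AtPrime p) (n + k + 1) (LocalizedModule p.primeCompl M) := by
  induction k with
  | zero => intro M _ n h; exact h
  | succ k ih =>
    intro M _ n h
    rw [Function.iterate_succ_apply] at h
    have := Om_finite M
    exact PD_loc_Om p M (n + k) (ih (Om M) n h)

theorem PD_res (p : Ideal R) [p.IsPrime] (n : ℕ)
    (h : PD (Localization.AtPrime p) n (LocalizedModule p.primeCompl (R ⧸ p))) :
    PD (Localization.AtPrime p) n (ResidueField (Localization.AtPrime p)) := by
  let N := Submodule.localized' (Localization.AtPrime p) p.primeCompl
    (Algebra.linearMap R (Localization.AtPrime p)) p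
  have hN : N = maximalIdeal (Localization.AtPrime p) := by
    rw [← Localization.AtPrime.map_eq_maximalIdeal,
      ← Ideal.localized'_eq_map (Localization.AtPrime p) p.primeCompl]
  let e : LocalizedModule p.primeCompl (R ⧸ p) ≃ₗ[R] ((Localization.AtPrime p) ⧸ N) :=
    IsLocalizedModule.linearEquiv p.primeCompl (LocalizedModule.mkLinearMap p.primeCompl (R ⧸ p))
      (Submodule.toLocalizedQuotient' (Localization.AtPrime p) p.primeCompl
        (Algebra.linearMap R (Localization.AtPrime p)) p)
  exact PD_congr ((e.extendScalarsOfIsLocalization p.primeCompl (Localization.AtPrime p)).trans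
    (Submodule.quotEquivOfEq _ _ hN)) h
end
end S7

namespace S7
section
variable {R : Type} [CommRing R]

theorem min_cover [IsLocalRing R] (M : Type) [AddCommGroup M] [Module R M] [Module.Finite R M] :
    ∃ (n : ℕ) (g : (Fin n → R) →ₗ[R] M), Function.Surjective g ∧
      ∀ x, g x = 0 → ∀ i, x i ∈ maximalIdeal R := by
  let w := Module.finBasis (ResidueField R) (ResidueField R ⊗[R] M)
  obtain ⟨v, eq⟩ := (TensorProduct.mk_surjective R M (ResidueField R)
    Ideal.Quotient.mk_surjective).comp_left w
  have eq' : ∀ i, (1 : ResidueField R) ⊗ₜ[R] v i = w i := congr_fun eq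
  refine ⟨_, Fintype.linearCombination R v, ?_, ?_⟩
  · rw [← LinearMap.range_eq_top, Fintype.range_linearCombination]
    exact IsLocalRing.span_eq_top_of_tmul_eq_basis v w eq'
  · intro x hx i
    have h1 : ∑ i, residue R (x i) • w i = 0 := by
      have := congrArg (fun y => (1 : ResidueField R) ⊗ₜ[R] y) hx
      simp only [Fintype.linearCombination_apply, TensorProduct.tmul_sum, TensorProduct.tmul_smul,
        eq', TensorProduct.tmul_zero] at this
      exact this
    have := Fintype.linearIndependent_iff.1 w.linearIndependent _ h1 i
    rwa [residue_eq_zero_iff] at this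

theorem free_of_PD_one [IsLocalRing R] [IsNoetherianRing R] (M : Type) [AddCommGroup M] [Module R M] [Module.Finite R M]
    (h : PD R 1 M) : Module.Free R M := by
  have := PD_one_iff.1 h
  exact Module.free_of_flat_of_isLocalRing

theorem free_of_socle [IsLocalRing R] [IsNoetherianRing R] (z : R) (hz : z ≠ 0)
    (hm : ∀ r ∈ maximalIdeal R, z * r = 0) (n : ℕ) : ∀ (M : Type) [AddCommGroup M] [Module R M]
      [Module.Finite R M], PD R (n + 1) M → Module.Free R M := by
  induction n with
  | zero => intro M _ _ _ h; exact free_of_PD_one M h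
  | succ n ih =>
    intro M _ _ _ h
    obtain ⟨k, g, hg, hg'⟩ := min_cover (R := R) M
    have h1 := (PD_ses_iff n _ g (Submodule.injective_subtype _) hg (exact_ker g)).1 h
    have hK : Module.Free R (LinearMap.ker g) := ih _ h1
    have h2 : ∀ x : LinearMap.ker g, x = 0 := by
      intro x
      have h3 : ∀ y : LinearMap.ker g, z • y = 0 := by
        intro y
        ext i
        exact hm _ (hg' y.1 y.2 i)
      let b := Module.Free.chooseBasis R (LinearMap.ker g)
      have h4 : IsEmpty (Module.Free.ChooseBasisIndex R (LinearMap.ker g)) := by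
        by_contra hne
        rw [not_isEmpty_iff] at hne
        obtain ⟨i⟩ := hne
        have h5 := congrArg (fun y => b.repr y i) (h3 (b i))
        simp at h5
        exact hz h5
      have := b.repr.injective.subsingleton
      exact Subsingleton.elim _ _
    have hinj : Function.Injective g := by
      rw [injective_iff_map_eq_zero]
      intro x hx
      exact congrArg Subtype.val (h2 ⟨x, hx⟩)
    exact Module.Free.of_equiv (LinearEquiv.ofBijective g ⟨hinj, hg⟩)

theorem PD_quot [IsNoetherianRing R] (x : R) (hx : x ∈ nonZeroDivisors R) (n : ℕ) : ∀ (M : Type) [AddCommGroup M] [Module R M]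
      [Module.Finite R M] (_ : ∀ m : M, x • m = 0 → m = 0),
      PD R (n + 1) M → PD (R ⧸ Ideal.span {x}) (n + 1) ((R ⧸ Ideal.span {x}) ⊗[R] M) := by
  induction n with
  | zero =>
    intro M _ _ _ _ h
    have := PD_one_iff.1 h
    exact PD_one_iff.2 inferInstance
  | succ n ih =>
    intro M _ _ _ hM h
    obtain ⟨k, g, hg⟩ := Module.Finite.exists_fin' R M
    have h1 := (PD_ses_iff n _ g (Submodule.injective_subtype _) hg (exact_ker g)).1 h
    have hF : ∀ m : Fin k → R, x • m = 0 → m = 0 := by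
      intro m hm
      ext i
      exact (mem_nonZeroDivisors_iff.1 hx).1 _ (congr_fun hm i)
    have h2 := ih (LinearMap.ker g) (fun m hm => Subtype.ext (hF _ (congrArg Subtype.val hm))) h1
    refine (PD_ses_iff n ((LinearMap.ker g).subtype.baseChange _) (g.baseChange _) ?_ ?_ ?_).2 h2
    · rw [injective_iff_map_eq_zero]
      intro z hz
      obtain ⟨y, rfl⟩ := TensorProduct.mk_surjective _ _ _ Ideal.Quotient.mk_surjective z
      rw [TensorProduct.mk_apply, LinearMap.baseChange_tmul, mem_smul_of_tmul,
        Submodule.ideal_span_singleton_smul, Submodule.mem_smul_pointwise_iff_exists] at hz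
      obtain ⟨u, -, hu⟩ := hz
      have h3 : g u = 0 := hM _ (by rw [← map_smul, hu]; exact y.2)
      rw [TensorProduct.mk_apply, mem_smul_of_tmul,
        Submodule.ideal_span_singleton_smul, Submodule.mem_smul_pointwise_iff_exists]
      exact ⟨⟨u, h3⟩, trivial, Subtype.ext hu⟩
    · exact LinearMap.lTensor_surjective _ hg
    · exact lTensor_exact _ (exact_ker g) hg
end
end S7

namespace S7
section
variable {R : Type} [CommRing R] [IsLocalRing R] [IsNoetherianRing R]

theorem exists_elt (h0 : maximalIdeal R ≠ ⊥) (hz : ∀ z : R, (∀ r ∈ maximalIdeal R, z * r = 0) → z = 0) :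
    ∃ x ∈ maximalIdeal R, x ∉ maximalIdeal R ^ 2 ∧ x ∈ nonZeroDivisors R := by
  by_contra! hcon
  have hfin := (associatedPrimes.finite R R).insert (maximalIdeal R ^ 2)
  have hsub : ((maximalIdeal R : Ideal R) : Set R) ⊆
      ⋃ i ∈ insert (maximalIdeal R ^ 2) (associatedPrimes R R), ((id i : Ideal R) : Set R) := by
    intro x hx
    by_cases hx2 : x ∈ maximalIdeal R ^ 2
    · exact Set.mem_biUnion (Set.mem_insert _ _) hx2
    · have h1 : x ∈ (nonZeroDivisors R : Set R)ᶜ := hcon x hx hx2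
      rw [← biUnion_associatedPrimes_eq_compl_nonZeroDivisors] at h1
      exact Set.biUnion_mono (Set.subset_insert _ _) (fun _ _ => subset_rfl) h1
  rw [Ideal.subset_union_prime_finite hfin (maximalIdeal R ^ 2) (maximalIdeal R ^ 2)] at hsub
  · obtain ⟨P, hP, hle⟩ := hsub
    rcases Set.mem_insert_iff.1 hP with rfl | hP
    · apply h0
      refine Submodule.eq_bot_of_le_smul_of_le_jacobson_bot (maximalIdeal R) _
        (IsNoetherian.noetherian _) ?_ (maximalIdeal_le_jacobson _)
      rw [smul_eq_mul, ← pow_two]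
      exact hle
    · obtain ⟨hpr, z, hzz⟩ := (isAssociatedPrime_iff.1 hP)
      have : z = 0 := hz z fun r hr => by
        have := hle hr
        simp only [id] at this
        rw [hzz] at this
        simpa [mul_comm, Submodule.mem_colon_singleton] using this
      rw [this] at hzz
      apply hpr.ne_top
      rw [hzz]
      simp
  · intro i hi hne _
    rcases Set.mem_insert_iff.1 hi with rfl | hi
    · exact absurd rfl hne
    · exact (isAssociatedPrime_iff.1 hi).1

theorem retract_max (x : R) (hx : x ∈ maximalIdeal R) (hx2 : x ∉ maximalIdeal R ^ 2)
    [IsLocalRing (R ⧸ Ideal.span {x})] :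
    ∃ (i : maximalIdeal (R ⧸ Ideal.span {x}) →ₗ[R ⧸ Ideal.span {x}]
        (R ⧸ Ideal.span {x}) ⊗[R] (maximalIdeal R))
      (r : (R ⧸ Ideal.span {x}) ⊗[R] (maximalIdeal R) →ₗ[R ⧸ Ideal.span {x}]
        maximalIdeal (R ⧸ Ideal.span {x})), r ∘ₗ i = LinearMap.id := by
  set S := R ⧸ Ideal.span {x} with hS
  have hcm : (maximalIdeal S).comap (algebraMap R S) = maximalIdeal R :=
    haveI := Ideal.comap_isMaximal_of_surjective (algebraMap R S) Ideal.Quotient.mk_surjective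
      (K := maximalIdeal S)
    eq_maximalIdeal this
  let π : maximalIdeal R →ₗ[R] maximalIdeal S :=
    { toFun := fun y => ⟨algebraMap R S y.1, hcm.ge y.2⟩
      map_add' := fun a b => Subtype.ext (map_add _ _ _)
      map_smul' := fun a b => by
        apply Subtype.ext
        simp [Algebra.smul_def] }
  have hπ : Function.Surjective π := by
    rintro ⟨s, hs⟩
    obtain ⟨y, rfl⟩ := Ideal.Quotient.mk_surjective s
    exact ⟨⟨y, hcm.le hs⟩, rfl⟩
  have hne : (maximalIdeal R).toCotangent ⟨x, hx⟩ ≠ 0 := by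
    rw [Ne, Ideal.toCotangent_eq_zero]; exact hx2
  obtain ⟨f, hf⟩ := Module.Projective.exists_dual_eq_one (ResidueField R) (V := CotangentSpace R) hne
  let φ : maximalIdeal R →ₗ[R] ResidueField R :=
    (f.restrictScalars R) ∘ₗ (maximalIdeal R).toCotangent
  let X : S ⊗[R] (maximalIdeal R) := 1 ⊗ₜ ⟨x, hx⟩
  let κ : ResidueField R →ₗ[R] S ⊗[R] (maximalIdeal R) :=
    Submodule.liftQ (maximalIdeal R) (LinearMap.toSpanSingleton R _ X) (by
      intro c hc
      rw [LinearMap.mem_ker, LinearMap.toSpanSingleton_apply, ← TensorProduct.tmul_smul,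
        show c • (⟨x, hx⟩ : maximalIdeal R) = x • ⟨c, hc⟩ from Subtype.ext (mul_comm _ _),
        TensorProduct.tmul_smul, TensorProduct.smul_tmul', Algebra.smul_def, mul_one,
        show algebraMap R S x = 0 from Ideal.Quotient.eq_zero_iff_mem.2 (Ideal.mem_span_singleton_self x),
        TensorProduct.zero_tmul])
  have hκ : ∀ c : R, κ (residue R c) = c • X := fun c => rfl
  let ψ : maximalIdeal R →ₗ[R] S ⊗[R] (maximalIdeal R) :=
    TensorProduct.mk R S (maximalIdeal R) 1 - κ ∘ₗ φ
  have hψx : ψ ⟨x, hx⟩ = 0 := by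
    have h1 : φ ⟨x, hx⟩ = residue R 1 := by rw [map_one]; exact hf
    simp only [ψ, LinearMap.sub_apply, LinearMap.comp_apply, h1, hκ, one_smul]
    exact sub_self _
  have hker : LinearMap.ker π ≤ LinearMap.ker ψ := by
    intro y hy
    have h1 : algebraMap R S y.1 = 0 := congrArg Subtype.val hy
    have h2 := Ideal.Quotient.eq_zero_iff_mem.1 h1
    obtain ⟨c, hc⟩ := Ideal.mem_span_singleton'.1 h2
    have h3 : y = c • ⟨x, hx⟩ := Subtype.ext hc.symm
    rw [LinearMap.mem_ker, h3, map_smul, hψx, smul_zero]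
  let r : S ⊗[R] (maximalIdeal R) →ₗ[S] maximalIdeal S := LinearMap.liftBaseChange S π
  have hr : ∀ y, r (ψ y) = π y := by
    intro y
    obtain ⟨c, hc⟩ := residue_surjective (φ y)
    simp only [ψ, LinearMap.sub_apply, LinearMap.comp_apply, ← hc, hκ, map_sub]
    have h1 : r (c • X) = 0 := by
      have : r X = 0 := by
        simp only [r, X, LinearMap.liftBaseChange_tmul, one_smul]
        exact Subtype.ext (Ideal.Quotient.eq_zero_iff_mem.2 (Ideal.mem_span_singleton_self x))
      rw [← algebraMap_smul S c X, map_smul, this, smul_zero]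
    rw [h1, sub_zero]
    simp [r]
  let i0 : maximalIdeal S →ₗ[R] S ⊗[R] (maximalIdeal R) :=
    (LinearMap.ker π).liftQ ψ hker ∘ₗ (π.quotKerEquivOfSurjective hπ).symm.toLinearMap
  have hi0 : ∀ y, i0 (π y) = ψ y := by
    intro y
    have : (π.quotKerEquivOfSurjective hπ).symm (π y) = Submodule.Quotient.mk y := by
      rw [LinearEquiv.symm_apply_eq]; rfl
    simp only [i0, LinearMap.comp_apply, LinearEquiv.coe_coe, this]
    rfl
  refine ⟨i0.extendScalarsOfSurjective Ideal.Quotient.mk_surjective, r, ?_⟩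
  ext1 s
  obtain ⟨y, rfl⟩ := hπ s
  simp only [LinearMap.comp_apply, LinearMap.extendScalarsOfSurjective_apply, hi0, hr, LinearMap.id_apply]
end
end S7

namespace S7
section

theorem regular_of_quot {R : Type} [CommRing R] [IsLocalRing R] [IsNoetherianRing R] (x : R)
    (hx : x ∈ maximalIdeal R) (hnz : x ∈ nonZeroDivisors R) [IsLocalRing (R ⧸ Ideal.span {x})]
    (h : IsRegularLocalRing (R ⧸ Ideal.span {x})) : IsRegularLocalRing R := by
  set S := R ⧸ Ideal.span {x} with hS
  have hcm : (maximalIdeal S).comap (algebraMap R S) = maximalIdeal R :=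
    have := Ideal.comap_isMaximal_of_surjective (algebraMap R S) Ideal.Quotient.mk_surjective
      (K := maximalIdeal S)
    eq_maximalIdeal this
  have hdim : ringKrullDim S + 1 ≤ ringKrullDim R := ringKrullDim_quotient_succ_le_of_nonZeroDivisor hnz
  have hreg := (isRegularLocalRing_iff S).1 h
  obtain ⟨s, hs, hspan⟩ := (IsNoetherian.noetherian (maximalIdeal S)).exists_span_finset_card_eq_spanFinrank
  apply IsRegularLocalRing.of_spanFinrank_maximalIdeal_le
  refine le_trans ?_ hdim
  rw [← hreg, ← hs]
  classical
  obtain ⟨l, hl⟩ := (Ideal.Quotient.mk_surjective (I := Ideal.span {x})).hasRightInverse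
  let t : Finset R := insert x (s.image l)
  have ht : Submodule.span R (t : Set R) = maximalIdeal R := by
    apply le_antisymm
    · rw [Submodule.span_le]
      intro y hy
      rcases Finset.mem_insert.1 hy with rfl | hy
      · exact hx
      · obtain ⟨u, hu, rfl⟩ := Finset.mem_image.1 hy
        apply hcm.le
        change Ideal.Quotient.mk (Ideal.span {x}) (l u) ∈ maximalIdeal S
        rw [hl u, ← hspan]
        exact Submodule.subset_span hu
    · rw [← hcm, ← hspan]
      have h1 : Submodule.span S (s : Set S) ≤ Ideal.map (algebraMap R S) (Ideal.span (t : Set R)) := by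
        rw [Submodule.span_le]
        intro u hu
        have := Ideal.mem_map_of_mem (algebraMap R S) (I := Ideal.span (t : Set R)) (x := l u)
          (Ideal.subset_span (Finset.mem_insert_of_mem (Finset.mem_image_of_mem _ hu)))
        rwa [show algebraMap R S (l u) = u from hl u] at this
      refine (Ideal.comap_mono h1).trans ?_
      rw [Ideal.comap_map_of_surjective (algebraMap R S) Ideal.Quotient.mk_surjective]
      refine sup_le le_rfl ?_
      intro y hy
      have h2 : algebraMap R S y = 0 := hy
      have h3 := Ideal.Quotient.eq_zero_iff_mem.1 h2
      refine (Ideal.span_mono ?_ : Ideal.span {x} ≤ Ideal.span (t : Set R)) h3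
      simp [t]
  have hcard : (maximalIdeal R).spanFinrank ≤ s.card + 1 := by
    rw [← ht]
    refine (Submodule.spanFinrank_span_le_ncard_of_finite t.finite_toSet).trans ?_
    rw [Set.ncard_coe_finset]
    exact (Finset.card_insert_le _ _).trans (Nat.add_le_add_right Finset.card_image_le 1)
  exact_mod_cast hcard

theorem serre (d : ℕ) : ∀ (R : Type) [CommRing R] [IsLocalRing R] [IsNoetherianRing R]
    (_ : ringKrullDim R < d) (n : ℕ) (_ : PD R n (ResidueField R)), IsRegularLocalRing R := by
  induction d with
  | zero =>
    intro R _ _ _ hd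
    exact absurd (ringKrullDim_nonneg_of_nontrivial (R := R)) (not_le.2 (by simpa using hd))
  | succ d ih =>
    intro R _ _ _ hd n h
    by_cases h0 : maximalIdeal R = ⊥
    · apply IsRegularLocalRing.of_spanFinrank_maximalIdeal_le
      rw [h0]
      simpa using ringKrullDim_nonneg_of_nontrivial (R := R)
    have hfin : Module.Finite R (ResidueField R) := inferInstance
    have hz : ∀ z : R, (∀ r ∈ maximalIdeal R, z * r = 0) → z = 0 := by
      intro z hz
      by_contra hne
      have hfree := free_of_socle z hne hz n (ResidueField R) (PD_mono (Nat.le_succ n) h)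
      apply h0
      rw [eq_bot_iff]
      intro r hr
      let b := Module.Free.chooseBasis R (ResidueField R)
      have hNT : Nontrivial (ResidueField R) := (IsLocalRing.ResidueField.field R).toNontrivial
      have hNE : Nonempty (Module.Free.ChooseBasisIndex R (ResidueField R)) := b.index_nonempty
      obtain ⟨i⟩ := hNE
      have h1 : r • b i = 0 := by
        rw [Algebra.smul_def]
        have : algebraMap R (ResidueField R) r = 0 := (residue_eq_zero_iff r).2 hr
        rw [this, zero_mul]
      have h5 := congrArg (fun y => b.repr y i) h1
      simpa using h5
    obtain ⟨x, hx, hx2, hnz⟩ := exists_elt h0 hz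
    have hnt : Nontrivial (R ⧸ Ideal.span {x}) := Ideal.Quotient.nontrivial_iff.2 (by
      intro htop
      apply (maximalIdeal.isMaximal R).ne_top
      rw [eq_top_iff, ← htop, Ideal.span_singleton_le_iff_mem]
      exact hx)
    have hloc : IsLocalRing (R ⧸ Ideal.span {x}) :=
      IsLocalRing.of_surjective' (Ideal.Quotient.mk _) Ideal.Quotient.mk_surjective
    apply regular_of_quot x hx hnz
    have h1 : PD R (n + 1) (maximalIdeal R) :=
      (PD_ses_iff n (maximalIdeal R).subtype (maximalIdeal R).mkQ (Submodule.injective_subtype _)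
        (Submodule.mkQ_surjective _) (LinearMap.exact_subtype_mkQ _)).1
        (PD_mono (by omega) h)
    have h2 := PD_quot x hnz n (maximalIdeal R) (by
      intro m hm
      apply Subtype.ext
      exact (mem_nonZeroDivisors_iff.1 hnz).1 _ (congrArg Subtype.val hm)) h1
    obtain ⟨i, r, hri⟩ := retract_max x hx hx2
    have h3 := PD_retract i r hri h2
    have h4 : PD (R ⧸ Ideal.span {x}) (n + 2) (ResidueField (R ⧸ Ideal.span {x})) :=
      (PD_ses_iff n (maximalIdeal (R ⧸ Ideal.span {x})).subtype (maximalIdeal (R ⧸ Ideal.span {x})).mkQ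
        (Submodule.injective_subtype _)
        (Submodule.mkQ_surjective _) (LinearMap.exact_subtype_mkQ _)).2 h3
    refine ih (R ⧸ Ideal.span {x}) ?_ _ h4
    have hdim : ringKrullDim (R ⧸ Ideal.span {x}) + 1 ≤ ringKrullDim R :=
      ringKrullDim_quotient_succ_le_of_nonZeroDivisor hnz
    have h6 := hdim.trans_lt hd
    push_cast at h6
    exact lt_of_add_lt_add_right h6

theorem exists_dim (R : Type) [CommRing R] [IsLocalRing R] [IsNoetherianRing R] :
    ∃ d : ℕ, ringKrullDim R = d := by
  have h1 : ringKrullDim R ≠ ⊤ := ringKrullDim_ne_top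
  have h2 : ringKrullDim R ≠ ⊥ := ringKrullDim_ne_bot
  obtain ⟨e, he⟩ := WithBot.ne_bot_iff_exists.1 h2
  rw [← he] at h1 ⊢
  obtain ⟨d, rfl⟩ := ENat.ne_top_iff_exists.1 (fun h : e = ⊤ => h1 (by rw [h]; rfl))
  exact ⟨d, rfl⟩

theorem serre' (R : Type) [CommRing R] [IsLocalRing R] [IsNoetherianRing R]
    (n : ℕ) (h : PD R n (ResidueField R)) : IsRegularLocal R := by
  obtain ⟨d, hd⟩ := exists_dim R
  have hreg := serre (d + 1) R (by rw [hd]; exact_mod_cast Nat.lt_succ_self d) n h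
  obtain ⟨s, hs, hspan⟩ :=
    (IsNoetherian.noetherian (maximalIdeal R)).exists_span_finset_card_eq_spanFinrank
  refine ⟨inferInstance, s, hspan, ?_⟩
  rw [hs]
  exact (isRegularLocalRing_iff R).1 hreg

end
end S7

/-- Let `R` be a Cohen-Macaulay noetherian local ring. Then the singular
locus of `R` is contained in `V(⋂_{i>0, K,L ∈ CM₀(R)} Ann_R Tor_i(K,L))`. -/
theorem stmt7 (R : Type) [CommRing R] [IsNoetherianRing R] [IsLocalRing R]
    (hCM : IsCMLocalRing R) :
    singularLocus R ⊆ PrimeSpectrum.zeroLocus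
      ((⨅ (i : ℕ) (_ : 0 < i) (K : ModuleCat.{0} R) (_ : MemCM0 R K)
          (L : ModuleCat.{0} R) (_ : MemCM0 R L),
          Module.annihilator R (TorMod R i K L) : Ideal R) : Set R) := by
  intro P hP
  rw [PrimeSpectrum.mem_zeroLocus]
  intro a ha
  by_contra hap
  apply hP
  obtain ⟨d, hd⟩ := S7.exists_dim R
  have hap' : a ∉ P.asIdeal := hap
  have hpr : P.asIdeal.IsPrime := P.isPrime
  have hann : ∀ K L : ModuleCat.{0} R, MemCM0 R K → MemCM0 R L →
      a ∈ Module.annihilator R (TorMod R 1 K L) := by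
    intro K L hK hL
    have h := ha
    simp only [SetLike.mem_coe, Submodule.mem_iInf] at h
    exact h 1 one_pos K hK L hL
  have hKT := S7.KT_main (a := a) d (ModuleCat.of R (R ⧸ P.asIdeal)) (ModuleCat.of R (R ⧸ P.asIdeal))
    (fun n l => S7.KT_of_ann _ _ a (hann _ _
      (S7.memCM0_Om d hd hCM (R ⧸ P.asIdeal) n) (S7.memCM0_Om d hd hCM (R ⧸ P.asIdeal) l)))
  have hf1 := S7.Omn_finite (ModuleCat.of R (R ⧸ P.asIdeal)) d
  have hf2 := S7.Omn_finite (S7.Om^[d] (ModuleCat.of R (R ⧸ P.asIdeal))) d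
  have hfree := S7.loc_free P.asIdeal hap' _ hKT
  have h1 : S7.PD (Localization.AtPrime P.asIdeal) (0 + 1) (LocalizedModule P.asIdeal.primeCompl
      (S7.Om^[d] (S7.Om^[d] (ModuleCat.of R (R ⧸ P.asIdeal))) : ModuleCat.{0} R)) :=
    S7.PD_of_free hfree
  have h2 := S7.PD_loc_Omn P.asIdeal d _ _ h1
  have h3 := S7.PD_loc_Omn P.asIdeal d _ _ h2
  exact S7.serre' _ _ (S7.PD_res P.asIdeal _ h3)

end
end
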